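/- arXiv:1609.08067 — 11 statements merged into one kernel-verified Lean document; each statement's English description precedes it below -/
import Mathlib

section
/- Let G(V,E) and G'(V,E') be two directed graphs on the vertex set [n] which differ in exactly one edge e, where e is a shortcut of the larger graph. Then d_G = d_{G'}, i.e., w_G(x) = w_{G'}(x) for all x ∈ F_q^n. -/
/-- The closure of a set of vertices `X` in the directed graph with edge relation `E`. -/
def gclosure {n : ℕ} (E : Fin n → Fin n → Prop) (X : Set (Fin n)) : Set (Fin n) :=
  {v | ∃ u ∈ X, Relation.ReflTransGen E u v}

/-- The `G`-weight of a word `x`. -/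
noncomputable def gweight {n : ℕ} {F : Type*} [Field F] (E : Fin n → Fin n → Prop)
    (x : Fin n → F) : ℕ :=
  (gclosure E {i | x i ≠ 0}).ncard

/-- `(u,v)` is a shortcut of the graph `E` if there is a simple directed path
(all vertices distinct) from `u` to `v` with at least two edges. -/
def IsShortcut {n : ℕ} (E : Fin n → Fin n → Prop) (u v : Fin n) : Prop :=
  ∃ (k : ℕ) (w : Fin (k + 1) → Fin n), 2 ≤ k ∧ w 0 = u ∧ w (Fin.last k) = v ∧
    Function.Injective w ∧ ∀ i : Fin k, E (w i.castSucc) (w i.succ)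

/-- if the directed graphs `E` and `E'` differ in exactly one edge `(a,b)`,
which is a shortcut of the larger graph `E'`, then `d_G = d_{G'}`, i.e. the `G`-weights
of all words coincide. -/
theorem stmt_1 {n : ℕ} (hn : 1 ≤ n) {F : Type*} [Field F] [Fintype F]
    (E E' : Fin n → Fin n → Prop) (hE : Irreflexive E) (hE' : Irreflexive E')
    (a b : Fin n) (hab : ¬ E a b)
    (hEE' : ∀ u v, E' u v ↔ E u v ∨ (u = a ∧ v = b))
    (hsc : IsShortcut E' a b) :
    ∀ x : Fin n → F, gweight E x = gweight E' x := by
  obtain ⟨k, w, hk, h0, hl, hinj, hw⟩ := hsc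
  have hstep : ∀ i : Fin k, E (w i.castSucc) (w i.succ) := by
    intro i
    rcases (hEE' _ _).1 (hw i) with h | ⟨h1, h2⟩
    · exact h
    · exfalso
      have e1 := congrArg Fin.val (hinj (h1.trans h0.symm))
      have e2 := congrArg Fin.val (hinj (h2.trans hl.symm))
      simp at e1 e2
      omega
  have hpath : ∀ i : Fin (k + 1), Relation.ReflTransGen E (w 0) (w i) := by
    intro i
    induction i using Fin.induction with
    | zero => exact Relation.ReflTransGen.refl
    | succ i ih => exact ih.tail (hstep i)
  have hreach : Relation.ReflTransGen E a b := by
    have := hpath (Fin.last k)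
    rwa [h0, hl] at this
  have key : ∀ u v, Relation.ReflTransGen E u v ↔ Relation.ReflTransGen E' u v := by
    intro u v
    constructor
    · intro h
      exact Relation.ReflTransGen.mono (fun x y hxy => (hEE' x y).2 (Or.inl hxy)) _ _ h
    · intro h
      induction h with
      | refl => exact Relation.ReflTransGen.refl
      | tail _ hxy ih =>
        rcases (hEE' _ _).1 hxy with h | ⟨h1, h2⟩
        · exact ih.tail h
        · subst h1
          subst h2
          exact ih.trans hreach
  intro x
  simp only [gweight, gclosure, key]
end

section
/- Let G_1(V,E_1) and G_2(V,E_2) be two directed graphs on the vertex set [n] such that d_{G_1} = d_{G_2} (equivalently, w_{G_1}(x) = w_{G_2}(x) for all x ∈ F_q^n). Then for all vertices u, v ∈ [n], v ∈ ⟨u⟩_{G_1} if and only if v ∈ ⟨u⟩_{G_2}. -/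
theorem mem_gclosure_iff_ncard {n : ℕ} (E : Fin n → Fin n → Prop) (u v : Fin n) :
    v ∈ gclosure E {u} ↔ (gclosure E {u, v}).ncard = (gclosure E {u}).ncard := by
  have hsub : gclosure E {u} ⊆ gclosure E {u, v} := by
    rintro w ⟨a, ha, hw⟩
    exact ⟨a, Or.inl ha, hw⟩
  constructor
  · rintro ⟨a, ha, hv⟩
    have ha' : a = u := ha
    subst ha'
    congr 1
    apply Set.Subset.antisymm _ hsub
    rintro w ⟨b, hb | hb, hw⟩
    · exact ⟨b, hb, hw⟩
    · have hb' : b = v := hb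
      subst hb'
      exact ⟨a, rfl, hv.trans hw⟩
  · intro hc
    have := Set.eq_of_subset_of_ncard_le hsub hc.le (Set.toFinite _)
    rw [this]
    exact ⟨v, Or.inr rfl, Relation.ReflTransGen.refl⟩

/-- if two directed graphs on `[n]` induce the same metric on `F_q^n`,
then for all vertices `u, v`, `v ∈ ⟨u⟩_{G₁}` iff `v ∈ ⟨u⟩_{G₂}`. -/
theorem stmt_3 {n : ℕ} (hn : 1 ≤ n) {F : Type*} [Field F] [Fintype F]
    (E₁ E₂ : Fin n → Fin n → Prop) (hE₁ : Irreflexive E₁) (hE₂ : Irreflexive E₂)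
    (h : ∀ x : Fin n → F, gweight E₁ x = gweight E₂ x) :
    ∀ u v : Fin n, v ∈ gclosure E₁ {u} ↔ v ∈ gclosure E₂ {u} := by
  classical
  have key : ∀ X : Set (Fin n), (gclosure E₁ X).ncard = (gclosure E₂ X).ncard := by
    intro X
    have hX := h (fun i => if i ∈ X then 1 else 0)
    simpa [gweight] using hX
  intro u v
  rw [mem_gclosure_iff_ncard, mem_gclosure_iff_ncard, key, key]
end

section
/- Let G_1(V,E_1) and G_2(V,E_2) be two directed graphs on the vertex set [n] inducing the same metric, i.e., w_{G_1}(x) = w_{G_2}(x) for all x ∈ F_q^n. Then the expanded canonical forms of G_1 and G_2 are equal: for all u ≠ v in [n], v is reachable from u by a directed path of length ≥ 1 in G_1 if and only if v is reachable from u by a directed path of length ≥ 1 in G_2. -/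
theorem gweight_char {n : ℕ} {F : Type*} [Field F] (E : Fin n → Fin n → Prop)
    (u v : Fin n) (huv : u ≠ v) :
    Relation.TransGen E u v ↔
      gweight E (fun i => if i = u then (1 : F) else 0) =
        gweight E (fun i => if i = u ∨ i = v then (1 : F) else 0) := by
  classical
  have h1 : {i | (if i = u then (1 : F) else 0) ≠ 0} = {u} := by
    ext i; simp
  have h2 : {i | (if i = u ∨ i = v then (1 : F) else 0) ≠ 0} = {u, v} := by
    ext i; by_cases a : i = u <;> by_cases b : i = v <;> simp [a, b]
  unfold gweight
  rw [h1, h2]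
  have hsub : gclosure E {u} ⊆ gclosure E {u, v} := by
    rintro w ⟨a, ha, hw⟩
    exact ⟨a, Or.inl ha, hw⟩
  constructor
  · intro ht
    congr 1
    apply Set.Subset.antisymm hsub
    rintro w ⟨a, rfl | rfl, hw⟩
    · exact ⟨a, rfl, hw⟩
    · exact ⟨u, rfl, ht.to_reflTransGen.trans hw⟩
  · intro hc
    have heq := Set.eq_of_subset_of_ncard_le hsub hc.ge (Set.toFinite _)
    have hv : v ∈ gclosure E {u, v} := ⟨v, Or.inr rfl, Relation.ReflTransGen.refl⟩
    rw [← heq] at hv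
    obtain ⟨a, rfl, hw⟩ := hv
    rcases Relation.reflTransGen_iff_eq_or_transGen.1 hw with e | e
    · exact absurd e.symm huv
    · exact e

/-- if two directed graphs on `[n]` induce the same metric on `F_q^n`, then
their expanded canonical forms are equal: for all `u ≠ v`, `v` is reachable from `u` by a
directed path of length `≥ 1` in `G₁` iff this holds in `G₂`. -/
theorem stmt_4 {n : ℕ} (hn : 1 ≤ n) {F : Type*} [Field F] [Fintype F]
    (E₁ E₂ : Fin n → Fin n → Prop) (hE₁ : Irreflexive E₁) (hE₂ : Irreflexive E₂)
    (h : ∀ x : Fin n → F, gweight E₁ x = gweight E₂ x) :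
    ∀ u v : Fin n, u ≠ v →
      (Relation.TransGen E₁ u v ↔ Relation.TransGen E₂ u v) := by
  intro u v huv
  rw [gweight_char (F := F) E₁ u v huv, gweight_char (F := F) E₂ u v huv, h, h]
end

section
/- Let G_1 and G_2 be two directed graphs on the vertex set [n]. If |⟨{i}⟩_{G_1}| = |⟨{i}⟩_{G_2}| for every i ∈ [n] and |⟨{i,j}⟩_{G_1}| = |⟨{i,j}⟩_{G_2}| for every pair i ≠ j in [n], then |⟨A⟩_{G_1}| = |⟨A⟩_{G_2}| for every subset A ⊆ [n]; in other words, the G-weights of all words with Hamming weight one or two determine the whole metric. -/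
theorem reach_iff {n : ℕ} (E : Fin n → Fin n → Prop) (i j : Fin n) :
    Relation.ReflTransGen E i j ↔ (gclosure E {i, j}).ncard = (gclosure E {i}).ncard := by
  have hsub : gclosure E {i} ⊆ gclosure E {i, j} := by
    rintro v ⟨u, hu, h⟩
    exact ⟨u, Or.inl hu, h⟩
  constructor
  · intro hij
    congr 1
    refine Set.Subset.antisymm ?_ hsub
    rintro v ⟨u, hu, h⟩
    rcases hu with rfl | hu
    · exact ⟨u, rfl, h⟩
    · rw [Set.mem_singleton_iff] at hu
      subst hu
      exact ⟨i, rfl, hij.trans h⟩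
  · intro h
    have heq := Set.eq_of_subset_of_ncard_le hsub h.le (Set.toFinite _)
    have hj : j ∈ gclosure E {i, j} := ⟨j, Or.inr rfl, Relation.ReflTransGen.refl⟩
    rw [← heq] at hj
    obtain ⟨u, hu, hr⟩ := hj
    rw [Set.mem_singleton_iff] at hu
    subst hu
    exact hr

/-- if two directed graphs on `[n]` have closures of the same cardinality
on all singletons and all pairs, then all their closures have the same cardinality;
i.e. the `G`-weights of the words of Hamming weight one or two determine the whole
metric. -/
theorem stmt_6 {n : ℕ} (hn : 1 ≤ n)
    (E₁ E₂ : Fin n → Fin n → Prop) (hE₁ : Irreflexive E₁) (hE₂ : Irreflexive E₂)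
    (hsingle : ∀ i : Fin n, (gclosure E₁ {i}).ncard = (gclosure E₂ {i}).ncard)
    (hpair : ∀ i j : Fin n, i ≠ j →
      (gclosure E₁ {i, j}).ncard = (gclosure E₂ {i, j}).ncard) :
    ∀ A : Set (Fin n), (gclosure E₁ A).ncard = (gclosure E₂ A).ncard := by
  have key : ∀ i j, Relation.ReflTransGen E₁ i j ↔ Relation.ReflTransGen E₂ i j := by
    intro i j
    by_cases hij : i = j
    · subst hij
      exact ⟨fun _ => .refl, fun _ => .refl⟩
    · rw [reach_iff, reach_iff, hsingle, hpair i j hij]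
  intro A
  congr 1
  ext v
  simp only [gclosure, Set.mem_setOf_eq, key]
end

section
/- Let n ≥ 2. Given any family S of nonempty subsets of [n] with |S| < ⌈n/2⌉ + n(n−1)/2, there exist two directed graphs G_1 and G_2 on [n] such that |⟨A⟩_{G_1}| = |⟨A⟩_{G_2}| for every A ∈ S, but |⟨B⟩_{G_1}| ≠ |⟨B⟩_{G_2}| for some subset B ⊆ [n]; that is, fewer than ⌈n/2⌉ + C(n,2) prescribed G-weights never suffice to reconstruct every graph metric, so D(n) ≥ ⌈n/2⌉ + n(n−1)/2. -/
/-- Vertices outside `T` dominate everything; the only other edge is `i → j` (if `i ≠ j`). -/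
def gE {n : ℕ} (T : Finset (Fin n)) (i j u v : Fin n) : Prop :=
  u ≠ v ∧ (u ∉ T ∨ (u = i ∧ v = j))

theorem gE_reach {n : ℕ} (T : Finset (Fin n)) (i j : Fin n) (hj : j ∈ T)
    (u v : Fin n) : Relation.ReflTransGen (gE T i j) u v ↔ u = v ∨ u ∉ T ∨ (u = i ∧ v = j) := by
  constructor
  · intro h
    induction h with
    | refl => exact Or.inl rfl
    | tail _ h ih =>
      unfold gE at h
      grind
  · intro h
    by_cases e : u = v
    · subst e; exact Relation.ReflTransGen.refl
    · exact Relation.ReflTransGen.single ⟨e, by tauto⟩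

theorem gcl_univ {n : ℕ} (T : Finset (Fin n)) (i j : Fin n) (hj : j ∈ T)
    (A : Finset (Fin n)) (h : ¬ A ⊆ T) : gclosure (gE T i j) (A : Set (Fin n)) = Set.univ := by
  obtain ⟨a, ha, hb⟩ := Finset.not_subset.1 h
  ext v
  simp only [gclosure, Set.mem_ofPred_eq, Set.mem_univ, iff_true]
  exact ⟨a, ha, (gE_reach T i j hj a v).2 (by tauto)⟩

theorem gcl_sub {n : ℕ} (T : Finset (Fin n)) (i j : Fin n) (hj : j ∈ T)
    (A : Finset (Fin n)) (h : A ⊆ T) : gclosure (gE T i j) (A : Set (Fin n)) =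
      ((if i ∈ A then insert j A else A : Finset (Fin n)) : Set (Fin n)) := by
  ext v
  simp only [gclosure, Set.mem_ofPred_eq, gE_reach T i j hj, Finset.mem_coe]
  constructor
  · rintro ⟨u, hu, h1⟩
    have := h hu
    grind
  · intro h1
    split_ifs at h1 with hi
    · rcases Finset.mem_insert.1 h1 with h2 | h2
      · exact ⟨i, hi, by tauto⟩
      · exact ⟨v, h2, by tauto⟩
    · exact ⟨v, h1, by tauto⟩

theorem gcl_eq {n : ℕ} (T : Finset (Fin n)) (i j k : Fin n) (hj : j ∈ T) (hk : k ∈ T)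
    (A : Finset (Fin n)) (h : A ⊆ T → i ∈ A → (j ∈ A ↔ k ∈ A)) :
    (gclosure (gE T i j) (A : Set (Fin n))).ncard =
      (gclosure (gE T i k) (A : Set (Fin n))).ncard := by
  by_cases hA : A ⊆ T
  · rw [gcl_sub T i j hj A hA, gcl_sub T i k hk A hA, Set.ncard_coe_finset, Set.ncard_coe_finset]
    split_ifs with hi
    · have := h hA hi
      rw [Finset.card_insert_eq_ite, Finset.card_insert_eq_ite]
      simp [this]
    · rfl
  · rw [gcl_univ T i j hj A hA, gcl_univ T i k hk A hA]

theorem gcl_ne {n : ℕ} (T : Finset (Fin n)) (i j k : Fin n) (hj : j ∈ T) (hk : k ∈ T)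
    (A : Finset (Fin n)) (hA : A ⊆ T) (hi : i ∈ A) (hjA : j ∈ A) (hkA : k ∉ A) :
    (gclosure (gE T i j) (A : Set (Fin n))).ncard ≠
      (gclosure (gE T i k) (A : Set (Fin n))).ncard := by
  rw [gcl_sub T i j hj A hA, gcl_sub T i k hk A hA, Set.ncard_coe_finset, Set.ncard_coe_finset,
    if_pos hi, if_pos hi, Finset.card_insert_eq_ite, Finset.card_insert_eq_ite]
  simp [hjA, hkA]

/-- for `n ≥ 2`, given any family `S` of nonempty subsets of `[n]` with
`|S| < ⌈n/2⌉ + C(n,2)`, there are two directed graphs on `[n]` whose closures agree in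
cardinality on every member of `S` but not on all subsets; hence `D(n) ≥ ⌈n/2⌉ + n(n−1)/2`. -/
theorem stmt_8 {n : ℕ} (hn : 2 ≤ n)
    (S : Finset (Finset (Fin n))) (hSne : ∀ A ∈ S, A.Nonempty)
    (hcard : S.card < (n + 1) / 2 + n.choose 2) :
    ∃ E₁ E₂ : Fin n → Fin n → Prop, Irreflexive E₁ ∧ Irreflexive E₂ ∧
      (∀ A ∈ S, (gclosure E₁ (A : Set (Fin n))).ncard =
        (gclosure E₂ (A : Set (Fin n))).ncard) ∧
      ∃ B : Set (Fin n), (gclosure E₁ B).ncard ≠ (gclosure E₂ B).ncard := by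
  have irr : ∀ (T : Finset (Fin n)) (i j : Fin n), Irreflexive (gE T i j) :=
    fun T i j x hx => hx.1 rfl
  by_cases h1 : ∃ i : Fin n, {i} ∉ S
  · obtain ⟨i, hi⟩ := h1
    haveI : Nontrivial (Fin n) := Fin.nontrivial_iff_two_le.2 hn
    obtain ⟨j, hj⟩ := exists_ne i
    refine ⟨gE {i, j} i i, gE {i, j} i j, irr _ _ _, irr _ _ _, ?_, (({i} : Finset (Fin n)) : Set (Fin n)),
      gcl_ne _ _ _ _ (by simp) (by simp) _ (by simp) (by simp) (by simp) (by simpa using hj)⟩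
    intro A hA
    apply gcl_eq _ _ _ _ (by simp) (by simp)
    intro hs hiA
    by_contra hc
    apply hi
    have : A = {i} := by
      ext x
      have := @hs x
      grind
    exact this ▸ hA
  by_cases h2 : ∃ i j k : Fin n, i ≠ j ∧ i ≠ k ∧ j ≠ k ∧ {i, j} ∉ S ∧ {i, k} ∉ S
  · obtain ⟨i, j, k, hij, hik, hjk, hS1, hS2⟩ := h2
    refine ⟨gE {i, j, k} i j, gE {i, j, k} i k, irr _ _ _, irr _ _ _, ?_,
      (({i, j} : Finset (Fin n)) : Set (Fin n)),
      gcl_ne _ _ _ _ (by simp) (by simp) _ (by grind) (by simp) (by simp) (by grind)⟩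
    intro A hA
    apply gcl_eq _ _ _ _ (by simp) (by simp)
    intro hs hiA
    by_contra hc
    by_cases hjA : j ∈ A
    · have : A = {i, j} := by
        ext x
        have := @hs x
        grind
      exact hS1 (this ▸ hA)
    · have : A = {i, k} := by
        ext x
        have := @hs x
        grind
      exact hS2 (this ▸ hA)
  exfalso
  push Not at h1 h2
  set P1 := Finset.powersetCard 1 (Finset.univ : Finset (Fin n)) with hP1
  set P2 := Finset.powersetCard 2 (Finset.univ : Finset (Fin n)) with hP2
  have c1 : P1.card = n := by simp [hP1]
  have c2 : P2.card = n.choose 2 := by simp [hP2]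
  have hM : ((P2 \ S).biUnion id).card = ∑ A ∈ P2 \ S, A.card := by
    apply Finset.card_biUnion
    intro A hA B hB hAB
    rw [Finset.mem_coe, Finset.mem_sdiff, hP2, Finset.mem_powersetCard] at hA hB
    rw [Function.onFun, id, id, Finset.disjoint_left]
    intro x hxA hxB
    apply hAB
    obtain ⟨a, b, hab, rfl⟩ := Finset.card_eq_two.1 hA.1.2
    obtain ⟨c, d, hcd, rfl⟩ := Finset.card_eq_two.1 hB.1.2
    have e1 : ∃ y, x ≠ y ∧ ({a, b} : Finset (Fin n)) = {x, y} := by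
      rcases Finset.mem_insert.1 hxA with h | h
      · exact ⟨b, by grind, by grind⟩
      · exact ⟨a, by grind, by grind⟩
    have e2 : ∃ y, x ≠ y ∧ ({c, d} : Finset (Fin n)) = {x, y} := by
      rcases Finset.mem_insert.1 hxB with h | h
      · exact ⟨d, by grind, by grind⟩
      · exact ⟨c, by grind, by grind⟩
    obtain ⟨y, hy, ey⟩ := e1
    obtain ⟨z, hz, ez⟩ := e2
    rw [ey] at hA ⊢
    rw [ez] at hB ⊢
    by_cases hyz : y = z
    · rw [hyz]
    · exact absurd (h2 x y z hy hz hyz hA.2) hB.2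
  have hM2 : ∑ A ∈ P2 \ S, A.card = (P2 \ S).card * 2 := by
    apply Finset.sum_const_nat
    intro A hA
    exact (Finset.mem_powersetCard.1 (Finset.mem_sdiff.1 hA).1).2
  have hM3 : ((P2 \ S).biUnion id).card ≤ n := by
    simpa using Finset.card_le_univ ((P2 \ S).biUnion id)
  have hsum : (P2 \ S).card + (P2 ∩ S).card = P2.card := Finset.card_sdiff_add_card_inter P2 S
  have hdis : Disjoint P1 (P2 ∩ S) := by
    rw [Finset.disjoint_left]
    intro A hA hB
    have := (Finset.mem_powersetCard.1 hA).2
    have := (Finset.mem_powersetCard.1 (Finset.mem_inter.1 hB).1).2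
    omega
  have hsub : P1 ∪ (P2 ∩ S) ⊆ S := by
    apply Finset.union_subset _ Finset.inter_subset_right
    intro A hA
    obtain ⟨a, rfl⟩ := Finset.card_eq_one.1 (Finset.mem_powersetCard.1 hA).2
    exact h1 a
  have := Finset.card_le_card hsub
  rw [Finset.card_union_of_disjoint hdis] at this
  omega
end

section
/- For every directed graph G on the vertex set [n] there exists a family S of nonempty subsets of [n] with |S| ≤ 2n − 1 such that for any directed graph G' on [n], if |⟨A⟩_{G'}| = |⟨A⟩_G| for all A ∈ S, then |⟨A⟩_{G'}| = |⟨A⟩_G| for all subsets A ⊆ [n]. In other words, M^max(n) ≤ 2n − 1: for any graph metric, at most 2n − 1 G-weights are needed to determine the whole metric. -/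
/-- for every directed graph `G` on `[n]` there is a family `S` of at most
`2n − 1` nonempty subsets of `[n]` (supports of words) such that any directed graph on `[n]`
agreeing with `G` on the closure cardinalities of the members of `S` agrees with `G` on the
closure cardinalities of all subsets; i.e. `M^max(n) ≤ 2n − 1`. -/
theorem stmt_10 {n : ℕ} (hn : 1 ≤ n)
    (E : Fin n → Fin n → Prop) (hE : Irreflexive E) :
    ∃ S : Finset (Finset (Fin n)),
      (∀ A ∈ S, A.Nonempty) ∧
      S.card ≤ 2 * n - 1 ∧
      ∀ E' : Fin n → Fin n → Prop, Irreflexive E' →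
        (∀ A ∈ S, (gclosure E' (A : Set (Fin n))).ncard =
          (gclosure E (A : Set (Fin n))).ncard) →
        ∀ A : Set (Fin n), (gclosure E' A).ncard = (gclosure E A).ncard := by
  classical
  let D : Fin n → Finset (Fin n) := fun v =>
    Finset.univ.filter (fun w => Relation.ReflTransGen E v w)
  have hD : ∀ v w, w ∈ D v ↔ Relation.ReflTransGen E v w := by
    intro v w; simp [D]
  have hself : ∀ v, v ∈ D v := fun v => (hD v v).2 Relation.ReflTransGen.refl
  have hmono : ∀ v u, u ∈ D v → D u ⊆ D v := fun v u h w hw =>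
    (hD v w).2 (((hD v u).1 h).trans ((hD u w).1 hw))
  obtain ⟨m, -, hm⟩ := Finset.exists_min_image (Finset.univ : Finset (Fin n))
    (fun v => (D v).card) ⟨⟨0, hn⟩, Finset.mem_univ _⟩
  let S1 : Finset (Finset (Fin n)) := Finset.univ.image (fun v : Fin n => ({v} : Finset (Fin n)))
  let S2 : Finset (Finset (Fin n)) := (Finset.univ.erase m).image D
  have hS1 : ∀ v : Fin n, ({v} : Finset (Fin n)) ∈ S1 ∪ S2 := fun v =>
    Finset.mem_union_left _ (Finset.mem_image_of_mem _ (Finset.mem_univ v))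
  have hS2' : ∀ v, v ≠ m → D v ∈ S1 ∪ S2 := fun v hv =>
    Finset.mem_union_right _ (Finset.mem_image_of_mem _ (by simp [hv]))
  have hS2 : ∀ v, D v ∈ S1 ∪ S2 := by
    intro v
    by_cases hv : v = m
    · subst hv
      by_cases h : ∃ u ∈ D v, u ≠ v
      · obtain ⟨u, hu, huv⟩ := h
        have : D u = D v :=
          Finset.eq_of_subset_of_card_le (hmono v u hu) (hm u (Finset.mem_univ _))
        rw [← this]
        exact hS2' u huv
      · push Not at h
        have : D v = {v} := by
          ext w
          rw [Finset.mem_singleton]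
          exact ⟨h w, fun e => e ▸ hself v⟩
        rw [this]
        exact hS1 v
    · exact hS2' v hv
  refine ⟨S1 ∪ S2, ?_, ?_, ?_⟩
  · intro A hA
    rcases Finset.mem_union.1 hA with h | h
    · obtain ⟨v, -, rfl⟩ := Finset.mem_image.1 h
      exact ⟨v, Finset.mem_singleton_self v⟩
    · obtain ⟨v, -, rfl⟩ := Finset.mem_image.1 h
      exact ⟨v, hself v⟩
  · have h0 := Finset.card_union_le S1 S2
    have h1 : S1.card ≤ n := by
      simpa using (Finset.card_image_le :
        S1.card ≤ (Finset.univ : Finset (Fin n)).card)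
    have h2 : S2.card ≤ n - 1 := by
      simpa using (Finset.card_image_le : S2.card ≤ (Finset.univ.erase m).card)
    omega
  · intro E' _ h A
    have hsub : ∀ (F : Fin n → Fin n → Prop) (X : Set (Fin n)), X ⊆ gclosure F X :=
      fun F X x hx => ⟨x, hx, Relation.ReflTransGen.refl⟩
    have hcl1 : ∀ v, gclosure E ({v} : Set (Fin n)) = (D v : Set (Fin n)) := by
      intro v; ext w; simp [gclosure, hD]
    have hclD : ∀ v, gclosure E (D v : Set (Fin n)) = (D v : Set (Fin n)) := by
      intro v
      refine Set.Subset.antisymm ?_ (hsub _ _)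
      rintro w ⟨u, hu, huw⟩
      exact hmono v u hu ((hD u w).2 huw)
    have hclD' : ∀ v, gclosure E' (D v : Set (Fin n)) = (D v : Set (Fin n)) := by
      intro v
      have h1 := h _ (hS2 v)
      rw [hclD] at h1
      exact (Set.eq_of_subset_of_ncard_le (hsub _ _) h1.le (Set.toFinite _)).symm
    have hcl1' : ∀ v, gclosure E' ({v} : Set (Fin n)) = (D v : Set (Fin n)) := by
      intro v
      have h1 := h _ (hS1 v)
      rw [Finset.coe_singleton, hcl1] at h1
      refine Set.eq_of_subset_of_ncard_le ?_ h1.ge (Set.toFinite _)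
      rw [← hclD' v]
      rintro w ⟨u, hu, huw⟩
      rw [Set.mem_singleton_iff] at hu
      subst hu
      exact ⟨u, hself u, huw⟩
    have key : ∀ v w, Relation.ReflTransGen E' v w ↔ Relation.ReflTransGen E v w := by
      intro v w
      have h1 : w ∈ gclosure E' ({v} : Set (Fin n)) ↔ w ∈ (D v : Set (Fin n)) := by
        rw [hcl1']
      simpa [gclosure, hD] using h1
    simp only [gclosure, key]
end

section
/- For every n ≥ 4 there exists a directed graph G on the vertex set [n] such that every family S of nonempty subsets of [n] with the property that any directed graph G' on [n] agreeing with G on the closure cardinalities of the members of S agrees with G on the closure cardinalities of all subsets, must satisfy |S| ≥ 2n − 4. In other words, M^max(n) ≥ 2n − 4. -/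
/-- The base relation: `u` dominates everything at distance at least two below it. -/
def ladE (n : ℕ) (u v : Fin n) : Prop := v.val + 2 ≤ u.val

/-- The relation where the row of the vertex `i` is modified. -/
def ladA (n i : ℕ) (a b : Prop) (u v : Fin n) : Prop :=
  (u.val ≠ i ∧ v.val + 2 ≤ u.val) ∨
    (u.val = i ∧ (v.val + 3 ≤ i ∨ (a ∧ v.val + 2 = i) ∨ (b ∧ v.val + 1 = i)))

lemma gclosure_of_trans {n : ℕ} (E : Fin n → Fin n → Prop)
    (hE : ∀ u v w, E u v → E v w → E u w) (X : Set (Fin n)) (v : Fin n) :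
    v ∈ gclosure E X ↔ ∃ u ∈ X, u = v ∨ E u v := by
  unfold gclosure
  constructor
  · rintro ⟨u, hu, h⟩
    refine ⟨u, hu, ?_⟩
    induction h with
    | refl => exact Or.inl rfl
    | tail _ hbc ih =>
      rcases ih with rfl | ih
      · exact Or.inr hbc
      · exact Or.inr (hE _ _ _ ih hbc)
  · rintro ⟨u, hu, rfl | h⟩
    · exact ⟨u, hu, Relation.ReflTransGen.refl⟩
    · exact ⟨u, hu, Relation.ReflTransGen.single h⟩

lemma mem_ladE {n : ℕ} (X : Set (Fin n)) (v : Fin n) :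
    v ∈ gclosure (ladE n) X ↔ ∃ u ∈ X, u.val = v.val ∨ v.val + 2 ≤ u.val := by
  rw [gclosure_of_trans _ (by unfold ladE; intros; omega)]
  simp only [Fin.ext_iff, ladE]

lemma mem_ladA {n i : ℕ} (a b : Prop) (X : Set (Fin n)) (v : Fin n) :
    v ∈ gclosure (ladA n i a b) X ↔ ∃ u ∈ X, u.val = v.val ∨ (u.val ≠ i ∧ v.val + 2 ≤ u.val) ∨
    (u.val = i ∧ (v.val + 3 ≤ i ∨ (a ∧ v.val + 2 = i) ∨ (b ∧ v.val + 1 = i))) := by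
  rw [gclosure_of_trans _ (by unfold ladA; intros; omega)]
  simp only [Fin.ext_iff, ladA]

lemma ladA_irrefl (n i : ℕ) (a b : Prop) : Irreflexive (ladA n i a b) := by
  intro u h
  unfold ladA at h
  omega

/-- Outside of the sets with maximum `i`, nothing changes. -/
lemma max_of_ne {n i : ℕ} (a b : Prop) (X : Set (Fin n))
    (h : (gclosure (ladA n i a b) X).ncard ≠ (gclosure (ladE n) X).ncard) :
    (∃ x ∈ X, x.val = i) ∧ ∀ x ∈ X, x.val ≤ i := by
  by_contra hc
  apply h
  congr 1
  ext v
  rw [mem_ladE, mem_ladA]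
  by_cases h1 : ∃ x ∈ X, x.val = i
  · have h2 : ∃ y ∈ X, i < y.val := by
      by_contra h2
      push Not at h2
      exact hc ⟨h1, h2⟩
    obtain ⟨x, hx, hxi⟩ := h1
    obtain ⟨y, hy, hyi⟩ := h2
    constructor
    · rintro ⟨u, hu, h⟩
      by_cases hui : u.val = i
      · by_cases huv : u.val = v.val
        · exact ⟨u, hu, Or.inl huv⟩
        · exact ⟨y, hy, by omega⟩
      · exact ⟨u, hu, by omega⟩
    · rintro ⟨u, hu, h⟩
      by_cases hui : u.val = i
      · by_cases huv : u.val = v.val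
        · exact ⟨u, hu, Or.inl huv⟩
        · exact ⟨y, hy, by omega⟩
      · exact ⟨u, hu, by omega⟩
  · push Not at h1
    constructor
    · rintro ⟨u, hu, h⟩
      have := h1 u hu
      exact ⟨u, hu, by omega⟩
    · rintro ⟨u, hu, h⟩
      have := h1 u hu
      exact ⟨u, hu, by omega⟩

lemma alt1 {n i : ℕ} (X : Set (Fin n)) (p : Fin n) (hp : p.val + 1 = i)
    (h : (gclosure (ladA n i True True) X).ncard ≠ (gclosure (ladE n) X).ncard) : p ∉ X := by
  intro hpX
  apply h
  congr 1
  ext v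
  rw [mem_ladE, mem_ladA]
  simp only [true_and, false_and, false_or, or_false]
  constructor
  · rintro ⟨u, hu, h⟩
    by_cases hv : v.val = p.val
    · exact ⟨p, hpX, by omega⟩
    · exact ⟨u, hu, by omega⟩
  · rintro ⟨u, hu, h⟩
    exact ⟨u, hu, by omega⟩

lemma alt2 {n i : ℕ} (X : Set (Fin n)) (p : Fin n) (hp : p.val + 2 = i)
    (h : (gclosure (ladA n i False False) X).ncard ≠ (gclosure (ladE n) X).ncard) : p ∉ X := by
  intro hpX
  apply h
  congr 1
  ext v
  rw [mem_ladE, mem_ladA]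
  simp only [true_and, false_and, false_or, or_false]
  constructor
  · rintro ⟨u, hu, h⟩
    exact ⟨u, hu, by omega⟩
  · rintro ⟨u, hu, h⟩
    by_cases hv : v.val = p.val
    · exact ⟨p, hpX, by omega⟩
    · exact ⟨u, hu, by omega⟩

lemma alt3 {n i : ℕ} (X : Set (Fin n)) (p q : Fin n) (hp : p.val + 1 = i) (hq : q.val + 2 = i)
    (h : (gclosure (ladA n i False True) X).ncard ≠ (gclosure (ladE n) X).ncard) :
    p ∈ X ∨ q ∈ X := by
  obtain ⟨⟨x, hx, hxi⟩, hmax⟩ := max_of_ne _ _ _ h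
  by_contra hc
  push Not at hc
  obtain ⟨hpX, hqX⟩ := hc
  apply h
  have hne : ∀ u ∈ X, u.val + 1 ≠ i ∧ u.val + 2 ≠ i := by
    intro u hu
    constructor
    · intro h
      exact hpX ((Fin.ext (by omega) : u = p) ▸ hu)
    · intro h
      exact hqX ((Fin.ext (by omega) : u = q) ▸ hu)
  have h1 : gclosure (ladA n i False True) X = insert p {v : Fin n | v.val = i ∨ v.val + 3 ≤ i} := by
    ext v
    rw [mem_ladA]
    simp only [true_and, false_and, false_or, Set.mem_insert_iff, Set.mem_ofPred_eq, Fin.ext_iff]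
    constructor
    · rintro ⟨u, hu, h⟩
      have := hne u hu
      have := hmax u hu
      omega
    · intro h
      exact ⟨x, hx, by omega⟩
  have h2 : gclosure (ladE n) X = insert q {v : Fin n | v.val = i ∨ v.val + 3 ≤ i} := by
    ext v
    rw [mem_ladE]
    simp only [Set.mem_insert_iff, Set.mem_ofPred_eq, Fin.ext_iff]
    constructor
    · rintro ⟨u, hu, h⟩
      have := hne u hu
      have := hmax u hu
      omega
    · intro h
      exact ⟨x, hx, by omega⟩
  rw [h1, h2, Set.ncard_insert_of_notMem (by simp only [Set.mem_ofPred_eq]; omega) (Set.toFinite _),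
    Set.ncard_insert_of_notMem (by simp only [Set.mem_ofPred_eq]; omega) (Set.toFinite _)]

lemma ncard_ne_of {n : ℕ} {s t : Set (Fin n)} (p : Fin n) (hst : ∀ v, v ∈ s → v ∈ t)
    (hp : p ∈ t) (hps : p ∉ s) : s.ncard ≠ t.ncard :=
  (Set.ncard_lt_ncard ⟨hst, fun h => hps (h hp)⟩ (Set.toFinite _)).ne

/-- Every modification is detected by some set. -/
lemma lad_exists_ne {n i : ℕ} (r p q : Fin n) (hr : r.val = i) (hp : p.val + 1 = i)
    (hq : q.val + 2 = i) (b : Prop) (a : Prop) (hab : (a ∧ b) ∨ ¬ a) :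
    ∃ X : Set (Fin n), (gclosure (ladA n i a b) X).ncard ≠ (gclosure (ladE n) X).ncard := by
  rcases hab with ⟨ha, hb⟩ | ha
  · refine ⟨{r}, (ncard_ne_of p ?_ ?_ ?_).symm⟩
    · intro v
      simp only [mem_ladE, mem_ladA, Set.mem_singleton_iff, exists_eq_left, ha, hb, true_and]
      omega
    · simp only [mem_ladA, Set.mem_singleton_iff, exists_eq_left, ha, hb, true_and]
      omega
    · simp only [mem_ladE, Set.mem_singleton_iff, exists_eq_left]
      omega
  · refine ⟨{r, p}, ncard_ne_of q ?_ ?_ ?_⟩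
    · intro v
      simp only [mem_ladE, mem_ladA, Set.mem_insert_iff, Set.mem_singleton_iff, exists_eq_or_imp,
        exists_eq_left, ha, false_and, false_or]
      omega
    · simp only [mem_ladE, Set.mem_insert_iff, Set.mem_singleton_iff, exists_eq_or_imp,
        exists_eq_left]
      omega
    · simp only [mem_ladA, Set.mem_insert_iff, Set.mem_singleton_iff, exists_eq_or_imp,
        exists_eq_left, ha, false_and, false_or]
      omega

lemma alt3' {n i : ℕ} (X : Set (Fin n)) (p q : Fin n) (hp : p.val + 1 = i) (hq : q.val + 2 = i)
    (h : (gclosure (ladA n i False True) X).ncard ≠ (gclosure (ladE n) X).ncard) :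
    ¬ (p ∈ X ∧ q ∈ X) := by
  rintro ⟨hpX, hqX⟩
  apply h
  congr 1
  ext v
  rw [mem_ladE, mem_ladA]
  simp only [true_and, false_and, false_or, or_false]
  constructor
  · rintro ⟨u, hu, h⟩
    by_cases hv : v.val = p.val
    · exact ⟨p, hpX, by omega⟩
    · exact ⟨u, hu, by omega⟩
  · rintro ⟨u, hu, h⟩
    by_cases hv : v.val = q.val
    · exact ⟨q, hqX, by omega⟩
    · exact ⟨u, hu, by omega⟩

/-- for every `n ≥ 4` there is a directed graph `G` on `[n]` such that every
family `S` of nonempty subsets of `[n]` whose closure cardinalities determine those of all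
subsets (among irreflexive directed graphs on `[n]`) has `|S| ≥ 2n − 4`;
i.e. `M^max(n) ≥ 2n − 4`. -/
theorem stmt_11 (n : ℕ) (hn : 4 ≤ n) :
    ∃ E : Fin n → Fin n → Prop, Irreflexive E ∧
      ∀ S : Finset (Finset (Fin n)), (∀ A ∈ S, A.Nonempty) →
        (∀ E' : Fin n → Fin n → Prop, Irreflexive E' →
          (∀ A ∈ S, (gclosure E' (A : Set (Fin n))).ncard =
            (gclosure E (A : Set (Fin n))).ncard) →
          ∀ A : Set (Fin n), (gclosure E' A).ncard = (gclosure E A).ncard) →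
        2 * n - 4 ≤ S.card := by
  classical
  refine ⟨ladE n, fun u h => by unfold ladE at h; omega, ?_⟩
  intro S _ hS
  let T : ℕ → Finset (Finset (Fin n)) := fun k =>
    S.filter (fun A => (∃ x ∈ A, x.val = k + 2) ∧ ∀ x ∈ A, x.val ≤ k + 2)
  have hdisj : ∀ j ∈ Finset.range (n - 2), ∀ k ∈ Finset.range (n - 2), j ≠ k →
      Disjoint (T j) (T k) := by
    intro j _ k _ hjk
    rw [Finset.disjoint_left]
    intro A hA hB
    simp only [T, Finset.mem_filter] at hA hB
    obtain ⟨-, ⟨x, hx, hx'⟩, h1⟩ := hA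
    obtain ⟨-, ⟨y, hy, hy'⟩, h2⟩ := hB
    have := h1 y hy
    have := h2 x hx
    omega
  have hcard : ∀ k ∈ Finset.range (n - 2), 2 ≤ (T k).card := by
    intro k hk
    rw [Finset.mem_range] at hk
    let r : Fin n := ⟨k + 2, by omega⟩
    let p : Fin n := ⟨k + 1, by omega⟩
    let q : Fin n := ⟨k, by omega⟩
    have key : ∀ a b : Prop, (a ∧ b) ∨ ¬ a → ∃ A ∈ T k,
        (gclosure (ladA n (k + 2) a b) (A : Set (Fin n))).ncard ≠
          (gclosure (ladE n) (A : Set (Fin n))).ncard := by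
      intro a b hab
      obtain ⟨X, hX⟩ := lad_exists_ne (i := k + 2) r p q rfl rfl rfl b a hab
      by_contra hc
      push Not at hc
      apply hX
      refine hS _ (ladA_irrefl _ _ _ _) ?_ X
      intro A hA
      by_contra hne
      have hm := max_of_ne _ _ _ hne
      exact hne (hc A (Finset.mem_filter.mpr ⟨hA, by simpa using hm⟩))
    obtain ⟨A, hA, hA'⟩ := key True True (by simp)
    obtain ⟨B, hB, hB'⟩ := key False False (by simp)
    obtain ⟨C, hC, hC'⟩ := key False True (by simp)
    have a1 := alt1 _ p rfl hA'
    have b1 := alt2 _ q rfl hB'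
    have c1 := alt3 _ p q rfl rfl hC'
    have c2 := alt3' _ p q rfl rfl hC'
    by_contra hlt
    have hle : (T k).card ≤ 1 := by omega
    rw [Finset.card_le_one] at hle
    have e1 := hle A hA C hC
    have e2 := hle B hB C hC
    subst e1
    subst e2
    tauto
  have h1 : ((Finset.range (n - 2)).biUnion T).card ≤ S.card := by
    apply Finset.card_le_card
    intro A hA
    obtain ⟨k, _, hk⟩ := Finset.mem_biUnion.mp hA
    exact (Finset.mem_filter.mp hk).1
  rw [Finset.card_biUnion hdisj] at h1
  have h2 := Finset.card_nsmul_le_sum (Finset.range (n - 2)) (fun k => (T k).card) 2 hcard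
  simp only [Finset.card_range, smul_eq_mul] at h2
  omega
end

section
/- Let G be a directed graph on the vertex set [n] and let φ be a permutation of [n] which is an automorphism of the expanded canonical form of G, i.e., for all u ≠ v, v is reachable from u by a directed path of length ≥ 1 in G if and only if φ(v) is so reachable from φ(u). Then the coordinate permutation map T_φ(x_1,…,x_n) = (x_{φ(1)},…,x_{φ(n)}) is a linear G-isometry of F_q^n. -/
/-- if a permutation `φ` of `[n]` is an automorphism of the expanded
canonical form of `G` (for all `u ≠ v`, `v` is reachable from `u` by a directed path of
length `≥ 1` iff `φ v` is so reachable from `φ u`), then the coordinate permutation map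
`T_φ(x)_i = x_{φ(i)}` is a linear `G`-isometry of `F_q^n`. -/
theorem stmt_13 {n : ℕ} (hn : 1 ≤ n) {F : Type*} [Field F] [Fintype F]
    (E : Fin n → Fin n → Prop) (hE : Irreflexive E)
    (φ : Equiv.Perm (Fin n))
    (hφ : ∀ u v : Fin n, u ≠ v →
      (Relation.TransGen E u v ↔ Relation.TransGen E (φ u) (φ v))) :
    ∃ T : (Fin n → F) →ₗ[F] (Fin n → F),
      (∀ (x : Fin n → F) (i : Fin n), T x i = x (φ i)) ∧
      Function.Bijective T ∧
      ∀ x : Fin n → F, gweight E (T x) = gweight E x := by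
  have key : ∀ u v : Fin n,
      Relation.ReflTransGen E u v ↔ Relation.ReflTransGen E (φ u) (φ v) := by
    intro u v
    by_cases h : u = v
    · subst h
      exact ⟨fun _ => Relation.ReflTransGen.refl, fun _ => Relation.ReflTransGen.refl⟩
    · rw [Relation.reflTransGen_iff_eq_or_transGen, Relation.reflTransGen_iff_eq_or_transGen,
        hφ u v h, φ.injective.eq_iff]
  refine ⟨(LinearEquiv.funCongrLeft F F φ).toLinearMap, fun x i => rfl,
    (LinearEquiv.funCongrLeft F F φ).bijective, fun x => ?_⟩
  unfold gweight
  rw [← Set.ncard_image_of_injective _ φ.injective]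
  congr 1
  ext w
  constructor
  · rintro ⟨v, ⟨u, hu, huv⟩, rfl⟩
    exact ⟨φ u, hu, (key u v).1 huv⟩
  · rintro ⟨u, hu, huw⟩
    refine ⟨φ.symm w, ⟨φ.symm u, ?_, (key _ _).2 (by simpa using huw)⟩, by simp⟩
    change x (φ (φ.symm u)) ≠ 0
    simpa using hu
end

section
/- Let G be a directed graph on the vertex set [n]. Every linear G-isometry T of F_q^n factors as T = T_φ ∘ S, where φ is a permutation of [n] which is an automorphism of the expanded canonical form of G (for all u ≠ v, v is reachable from u by a path of length ≥ 1 in G iff φ(v) is so reachable from φ(u)), T_φ is the coordinate permutation map T_φ(x_1,…,x_n) = (x_{φ(1)},…,x_{φ(n)}), and S is a linear map respecting domination (writing S(e_i) = Σ_j α_{ij} e_j, α_{ii} ≠ 0 for all i and α_{ij} ≠ 0 implies i dominates j). That is, GL(n,G)_q = Aut(G̃) ⋉ N(G). -/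
/-- The principal closure of one vertex. -/
def pcl {n : ℕ} (E : Fin n → Fin n → Prop) (i : Fin n) : Set (Fin n) :=
  {v | Relation.ReflTransGen E i v}

lemma pcl_sub_of_mem {n : ℕ} (E : Fin n → Fin n → Prop) (X : Set (Fin n)) (i : Fin n)
    (h : i ∈ gclosure E X) : pcl E i ⊆ gclosure E X := by
  obtain ⟨u, hu, hui⟩ := h
  exact fun v hv => ⟨u, hu, hui.trans hv⟩

lemma mem_gclosure_self {n : ℕ} (E : Fin n → Fin n → Prop) (X : Set (Fin n)) (i : Fin n)
    (h : i ∈ X) : i ∈ gclosure E X := ⟨i, h, Relation.ReflTransGen.refl⟩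

lemma gweight_single {n : ℕ} {F : Type*} [Field F] (E : Fin n → Fin n → Prop) (i : Fin n)
    (c : F) (hc : c ≠ 0) : gweight E (Pi.single i c : Fin n → F) = (pcl E i).ncard := by
  unfold gweight
  congr 1
  ext v
  constructor
  · rintro ⟨u, hu, huv⟩
    have : u = i := by
      by_contra hne
      exact hu (by simp [Pi.single_apply, hne])
    subst this
    exact huv
  · intro hv
    exact ⟨i, by simpa using hc, hv⟩

lemma principal_image {n : ℕ} {F : Type*} [Field F]
    (E : Fin n → Fin n → Prop)
    (T : (Fin n → F) →ₗ[F] (Fin n → F)) (hTbij : Function.Bijective T)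
    (hTiso : ∀ x : Fin n → F, gweight E (T x) = gweight E x) (i : Fin n) :
    ∃ j, gclosure E {k | T (Pi.single i 1) k ≠ 0} = pcl E j := by
  set y := T (Pi.single i 1) with hy
  choose z hz using fun j => hTbij.2 (Pi.single j (y j))
  have hsum : ∑ j, z j = Pi.single i 1 := by
    apply hTbij.1
    rw [map_sum, ← hy]
    simp only [hz]
    exact Finset.univ_sum_single y
  have h1 : ∑ j, z j i = 1 := by
    have := congrFun hsum i
    simpa using this
  obtain ⟨j, -, hj⟩ : ∃ j ∈ Finset.univ, z j i ≠ 0 := by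
    apply Finset.exists_ne_zero_of_sum_ne_zero
    rw [h1]; exact one_ne_zero
  have hyj : y j ≠ 0 := by
    intro h0
    have h2 := hz j
    rw [h0, Pi.single_zero] at h2
    have h3 : z j = 0 := hTbij.1 (by rw [h2, map_zero])
    exact hj (by rw [h3]; rfl)
  have hle : (pcl E i).ncard ≤ (pcl E j).ncard := by
    rw [← gweight_single (F := F) E j (y j) hyj, ← hz j, hTiso]
    exact Set.ncard_le_ncard (pcl_sub_of_mem E _ i (mem_gclosure_self E _ i hj)) (Set.toFinite _)
  have hw : (gclosure E {k | y k ≠ 0}).ncard = (pcl E i).ncard := by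
    have := hTiso (Pi.single i 1)
    rw [gweight_single E i 1 one_ne_zero] at this
    exact this
  refine ⟨j, (Set.eq_of_subset_of_ncard_le
    (pcl_sub_of_mem E _ j (mem_gclosure_self E _ j hyj)) ?_ (Set.toFinite _)).symm⟩
  rw [hw]; exact hle

lemma principal_mono {n : ℕ} {F : Type*} [Field F]
    (E : Fin n → Fin n → Prop)
    (T : (Fin n → F) →ₗ[F] (Fin n → F))
    (hTiso : ∀ x : Fin n → F, gweight E (T x) = gweight E x) (f : Fin n → Fin n)
    (hf : ∀ i, gclosure E {k | T (Pi.single i 1) k ≠ 0} = pcl E (f i))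
    (hcard : ∀ i, (pcl E (f i)).ncard = (pcl E i).ncard)
    (i i' : Fin n) (h : Relation.ReflTransGen E i i') :
    Relation.ReflTransGen E (f i) (f i') := by
  by_contra hn
  have hsub : pcl E i' ⊆ pcl E i := fun v hv => h.trans hv
  have hle : (pcl E (f i')).ncard ≤ (pcl E (f i)).ncard := by
    rw [hcard, hcard]; exact Set.ncard_le_ncard hsub (Set.toFinite _)
  have hn' : ¬ Relation.ReflTransGen E (f i') (f i) := by
    intro h2
    have hs : pcl E (f i) ⊆ pcl E (f i') := fun v hv => h2.trans hv
    have heq := Set.eq_of_subset_of_ncard_le hs hle (Set.toFinite _)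
    have : f i' ∈ pcl E (f i) := by rw [heq]; exact Relation.ReflTransGen.refl
    exact hn this
  have key : ∀ a b : Fin n, ¬ Relation.ReflTransGen E (f a) (f b) →
      f b ∈ gclosure E {k | (T (Pi.single a 1) + T (Pi.single b 1)) k ≠ 0} := by
    intro a b hab
    have hb : f b ∈ gclosure E {k | T (Pi.single b 1) k ≠ 0} := by
      rw [hf]; exact Relation.ReflTransGen.refl
    obtain ⟨k, hk, hkb⟩ := hb
    refine ⟨k, ?_, hkb⟩
    have h0 : T (Pi.single a 1) k = 0 := by
      by_contra h0
      have : k ∈ pcl E (f a) := by rw [← hf]; exact mem_gclosure_self E _ k h0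
      exact hab (Relation.ReflTransGen.trans this hkb)
    change T (Pi.single a 1) k + T (Pi.single b 1) k ≠ 0
    rw [h0, zero_add]; exact hk
  have k1 := key i i' hn
  have k2 := key i' i hn'
  rw [add_comm] at k2
  have hss : pcl E (f i) ⊂ gclosure E {k | (T (Pi.single i 1) + T (Pi.single i' 1)) k ≠ 0} :=
    ⟨pcl_sub_of_mem E _ _ k2, fun hc => hn (hc k1)⟩
  have hlt := Set.ncard_lt_ncard hss (Set.toFinite _)
  have hw := hTiso (Pi.single i 1 + Pi.single i' 1)
  rw [map_add] at hw
  have hup : gweight E (Pi.single i 1 + Pi.single i' 1 : Fin n → F) ≤ (pcl E i).ncard := by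
    apply Set.ncard_le_ncard _ (Set.toFinite _)
    rintro v ⟨u, hu, huv⟩
    have hu' : u = i ∨ u = i' := by
      by_contra hc
      push Not at hc
      exact hu (by simp [Pi.single_apply, hc.1, hc.2])
    rcases hu' with rfl | rfl
    · exact huv
    · exact h.trans huv
  rw [← hw, ← hcard] at hup
  exact absurd hlt (not_lt.mpr hup)

lemma exists_perm {n : ℕ} {F : Type*} [Field F]
    (T : (Fin n → F) →ₗ[F] (Fin n → F)) (hTbij : Function.Bijective T) :
    ∃ σ : Equiv.Perm (Fin n), ∀ i, T (Pi.single i 1) (σ i) ≠ 0 := by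
  have hu : IsUnit (LinearMap.toMatrix' T) :=
    by
      have : IsUnit T := (Module.End.isUnit_iff T).2 hTbij
      exact this.map LinearMap.toMatrixAlgEquiv'
  have hdet : (LinearMap.toMatrix' T).det ≠ 0 :=
    ((Matrix.isUnit_iff_isUnit_det _).1 hu).ne_zero
  rw [Matrix.det_apply] at hdet
  obtain ⟨σ, -, hσ⟩ := Finset.exists_ne_zero_of_sum_ne_zero hdet
  refine ⟨σ, fun i h0 => hσ ?_⟩
  rw [Finset.prod_eq_zero (Finset.mem_univ i), smul_zero]
  rw [LinearMap.toMatrix'_apply]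
  convert h0 using 3

lemma transGen_iff_of_ne {n : ℕ} (E : Fin n → Fin n → Prop) {u v : Fin n} (h : u ≠ v) :
    Relation.TransGen E u v ↔ Relation.ReflTransGen E u v := by
  rw [Relation.reflTransGen_iff_eq_or_transGen]
  constructor
  · exact Or.inr
  · rintro (h' | h')
    · exact absurd h'.symm h
    · exact h'

/-- every linear `G`-isometry `T` of `F_q^n` factors as `T = T_φ ∘ S`, where
`φ` is a permutation of `[n]` which is an automorphism of the expanded canonical form of
`G`, `T_φ` is the coordinate permutation map `T_φ(x)_i = x_{φ(i)}`, and `S` is a linear map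
respecting domination; that is, `GL(n,G)_q = Aut(G̃) ⋉ N(G)`. -/
theorem stmt_14 {n : ℕ} (hn : 1 ≤ n) {F : Type*} [Field F] [Fintype F]
    (E : Fin n → Fin n → Prop) (hE : Irreflexive E)
    (T : (Fin n → F) →ₗ[F] (Fin n → F)) (hTbij : Function.Bijective T)
    (hTiso : ∀ x : Fin n → F, gweight E (T x) = gweight E x) :
    ∃ (φ : Equiv.Perm (Fin n)) (S : (Fin n → F) →ₗ[F] (Fin n → F)),
      (∀ u v : Fin n, u ≠ v →
        (Relation.TransGen E u v ↔ Relation.TransGen E (φ u) (φ v))) ∧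
      (∀ i : Fin n, S (Pi.single i 1) i ≠ 0) ∧
      (∀ i j : Fin n, S (Pi.single i 1) j ≠ 0 → Relation.ReflTransGen E i j) ∧
      (∀ (x : Fin n → F) (i : Fin n), T x i = S x (φ i)) := by
  choose f hf using principal_image E T hTbij hTiso
  have hcard : ∀ i, (pcl E (f i)).ncard = (pcl E i).ncard := by
    intro i
    rw [← hf, ← gweight_single (F := F) E i 1 one_ne_zero, ← hTiso]
    rfl
  have hmono := principal_mono E T hTiso f hf hcard
  obtain ⟨σ, hσ⟩ := exists_perm T hTbij
  have hmem : ∀ i k, T (Pi.single i 1) k ≠ 0 → Relation.ReflTransGen E (f i) k := by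
    intro i k hk
    have : k ∈ pcl E (f i) := by rw [← hf]; exact mem_gclosure_self E _ k hk
    exact this
  have hsub : ∀ i, pcl E (σ i) ⊆ pcl E (f i) := fun i v hv => (hmem i _ (hσ i)).trans hv
  have hle : ∀ i ∈ Finset.univ, (pcl E (σ i)).ncard ≤ (pcl E (f i)).ncard := fun i _ =>
    Set.ncard_le_ncard (hsub i) (Set.toFinite _)
  have hsum : ∑ i, (pcl E (σ i)).ncard = ∑ i, (pcl E (f i)).ncard := by
    rw [Equiv.sum_comp σ (fun i => (pcl E i).ncard)]
    exact Finset.sum_congr rfl fun i _ => (hcard i).symm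
  have heqc := (Finset.sum_eq_sum_iff_of_le hle).1 hsum
  have heq : ∀ i, pcl E (σ i) = pcl E (f i) := fun i =>
    Set.eq_of_subset_of_ncard_le (hsub i) (heqc i (Finset.mem_univ i)).ge (Set.toFinite _)
  have hσf : ∀ i k, Relation.ReflTransGen E (f i) k → Relation.ReflTransGen E (σ i) k := by
    intro i k hk
    have : k ∈ pcl E (σ i) := by rw [heq]; exact hk
    exact this
  have hσmono : ∀ i j, Relation.ReflTransGen E i j → Relation.ReflTransGen E (σ i) (σ j) :=
    fun i j hij => hσf i _ ((hmono i j hij).trans (hmem j _ (hσ j)))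
  have hσrefl : ∀ i j, Relation.ReflTransGen E (σ i) (σ j) → Relation.ReflTransGen E i j := by
    let P := {p : Fin n × Fin n // Relation.ReflTransGen E p.1 p.2}
    let g : P → P := fun p => ⟨(σ p.1.1, σ p.1.2), hσmono _ _ p.2⟩
    have hg : Function.Injective g := by
      rintro ⟨⟨a, b⟩, h1⟩ ⟨⟨c, d⟩, h2⟩ h
      have h3 : (σ a, σ b) = (σ c, σ d) := congrArg Subtype.val h
      apply Subtype.ext
      simpa using h3
    have hgs : Function.Surjective g := Finite.surjective_of_injective hg
    intro i j hij
    obtain ⟨⟨⟨a, b⟩, hab⟩, hp⟩ := hgs ⟨(σ i, σ j), hij⟩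
    have hp : (σ a, σ b) = (σ i, σ j) := congrArg Subtype.val hp
    simp only [Prod.mk.injEq, EmbeddingLike.apply_eq_iff_eq] at hp
    obtain ⟨rfl, rfl⟩ := hp
    exact hab
  refine ⟨σ.symm, (LinearMap.funLeft F F σ).comp T, ?_, ?_, ?_, ?_⟩
  · intro u v huv
    have huv' : σ.symm u ≠ σ.symm v := fun h => huv (σ.symm.injective h)
    rw [transGen_iff_of_ne E huv, transGen_iff_of_ne E huv']
    constructor
    · intro h; apply hσrefl; simpa using h
    · intro h; simpa using hσmono _ _ h
  · exact hσ
  · intro i j hij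
    exact hσrefl i j (hσf i _ (hmem i _ hij))
  · intro x i
    simp [LinearMap.funLeft_apply]
end

section
/- Let G be a directed graph on [n] whose reduced canonical form determines a hierarchical poset P_G. Then the group of linear G-isometries of F_q^n acts transitively on the spheres of (F_q^n, d_G) — i.e., for all x, y ∈ F_q^n with w_G(x) = w_G(y) there is a linear G-isometry T with T(x) = y — if and only if G satisfies the Unique Decomposition Property. -/
/-- `u` dominates `v`: `v` is reachable from `u` by a directed path. -/
def gdom {n : ℕ} (E : Fin n → Fin n → Prop) : Fin n → Fin n → Prop :=
  Relation.ReflTransGen E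

/-- Clique equivalence: `u` and `v` dominate each other. -/
def cliqueSetoid {n : ℕ} (E : Fin n → Fin n → Prop) : Setoid (Fin n) where
  r u v := gdom E u v ∧ gdom E v u
  iseqv := ⟨fun _ => ⟨Relation.ReflTransGen.refl, Relation.ReflTransGen.refl⟩,
    fun h => ⟨h.2, h.1⟩,
    fun h₁ h₂ => ⟨h₁.1.trans h₂.1, h₂.2.trans h₁.2⟩⟩

/-- The set of classes `V′` of the reduced canonical form of `G`. -/
def Vred {n : ℕ} (E : Fin n → Fin n → Prop) : Type :=
  Quotient (cliqueSetoid E)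

/-- The projection `π` from vertices to their classes. -/
def gpi {n : ℕ} (E : Fin n → Fin n → Prop) (v : Fin n) : Vred E :=
  Quotient.mk (cliqueSetoid E) v

/-- The order of the poset `P_G` on the classes: `π(v) ⪯ π(u)` iff `u` dominates `v`. -/
def ple {n : ℕ} (E : Fin n → Fin n → Prop) (a b : Vred E) : Prop :=
  ∃ u v : Fin n, gpi E v = a ∧ gpi E u = b ∧ gdom E u v

/-- The weight `L(a)` of a class: the number of vertices in it. -/
noncomputable def lwt {n : ℕ} (E : Fin n → Fin n → Prop) (a : Vred E) : ℕ :=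
  {v : Fin n | gpi E v = a}.ncard

/-- The height of `a` in `P_G`: the maximum cardinality of a chain of `P_G` having `a`
as its maximal element. -/
noncomputable def hgt {n : ℕ} (E : Fin n → Fin n → Prop) (a : Vred E) : ℕ :=
  sSup {k | ∃ c : Set (Vred E), c.ncard = k ∧ a ∈ c ∧ (∀ x ∈ c, ple E x a) ∧
    ∀ x ∈ c, ∀ y ∈ c, ple E x y ∨ ple E y x}

/-- `P_G` is hierarchical: every element of height `i > 1` lies strictly above every
element of height `i − 1`. -/
def Hierarchical {n : ℕ} (E : Fin n → Fin n → Prop) : Prop :=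
  ∀ a b : Vred E, 1 < hgt E a → hgt E b + 1 = hgt E a → (ple E b a ∧ b ≠ a)

/-- `G` satisfies the Unique Decomposition Property: any two subsets of a level of `P_G`
with the same total `L`-weight are matched by an `L`-preserving bijection. -/
def UDP {n : ℕ} (E : Fin n → Fin n → Prop) : Prop :=
  ∀ (i : ℕ) (S S' : Set (Vred E)),
    S ⊆ {a | hgt E a = i} → S' ⊆ {a | hgt E a = i} →
    (∑ᶠ a ∈ S, lwt E a) = (∑ᶠ a ∈ S', lwt E a) →
    ∃ g : Vred E → Vred E, Set.BijOn g S S' ∧ ∀ a ∈ S, lwt E (g a) = lwt E a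

section Abstract

variable {ι C F : Type*} [Finite ι] [Field F]

/-- Closure of the support in the hierarchical setting. -/
def acl (p : ι → C) (H : C → ℕ) (x : ι → F) : Set ι :=
  {v | ∃ u, x u ≠ 0 ∧ (p u = p v ∨ H (p v) < H (p u))}

/-- Classes of level `i` touched by `x`. -/
def tau (p : ι → C) (H : C → ℕ) (i : ℕ) (x : ι → F) : Set C :=
  {a | H a = i ∧ ∃ u, p u = a ∧ x u ≠ 0}

/-- Number of vertices lying in classes of `A`. -/
noncomputable def lam (p : ι → C) (A : Set C) : ℕ := (Set.preimage p A).ncard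

/-- Words supported on levels at most `i`. -/
def Vle (p : ι → C) (H : C → ℕ) (i : ℕ) (x : ι → F) : Prop := ∀ u, x u ≠ 0 → H (p u) ≤ i

/-- Indicator word of a set of classes. -/
noncomputable def ind (F : Type*) [Field F] (p : ι → C) (S : Set C) : ι → F :=
  (Set.preimage p S).indicator 1


theorem lam_mono (p : ι → C) {A B : Set C} (h : A ⊆ B) : lam p A ≤ lam p B :=
  Set.ncard_le_ncard (Set.preimage_mono h) (Set.toFinite _)

theorem lam_union (p : ι → C) {A B : Set C} (h : Disjoint A B) :
    lam p (A ∪ B) = lam p A + lam p B := by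
  unfold lam
  rw [Set.preimage_union, Set.ncard_union_eq (h.preimage p) (Set.toFinite _) (Set.toFinite _)]

theorem lam_pos (p : ι → C) (hp : Function.Surjective p) {A : Set C} {a : C} (h : a ∈ A) :
    0 < lam p A := by
  obtain ⟨u, rfl⟩ := hp a
  exact (Set.ncard_pos (Set.toFinite _)).2 ⟨u, h⟩

theorem tau_lev {p : ι → C} {H : C → ℕ} {i : ℕ} {x : ι → F} {a : C} (h : a ∈ tau p H i x) :
    H a = i := h.1

theorem W_sub (p : ι → C) (H : C → ℕ) (i : ℕ) (x : ι → F) (hx : Vle p H i x) :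
    (acl p H x).ncard - lam p {a | H a < i} = lam p (tau p H i x) := by
  by_cases hne : ∃ u, x u ≠ 0 ∧ H (p u) = i
  · obtain ⟨u, hu, hui⟩ := hne
    have : acl p H x = Set.preimage p ({a | H a < i} ∪ tau p H i x) := by
      ext v
      simp only [acl, tau, Set.mem_ofPred_eq, Set.mem_preimage, Set.mem_union]
      constructor
      · rintro ⟨w, hw, h⟩
        have := hx w hw
        rcases h with h | h
        · rcases this.lt_or_eq with h1 | h1
          · left; rw [← h]; exact h1
          · right; exact ⟨by rw [← h]; exact h1, w, h, hw⟩
        · left; omega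
      · rintro (h | ⟨h, w, hw, hw0⟩)
        · exact ⟨u, hu, Or.inr (by omega)⟩
        · exact ⟨w, hw0, Or.inl hw⟩
    have h2 := lam_union p (A := {a | H a < i}) (B := tau p H i x) (by
      rw [Set.disjoint_left]
      intro a ha hb
      have := hb.1
      simp only [Set.mem_ofPred_eq] at ha
      omega)
    have h3 : (acl p H x).ncard = lam p ({a | H a < i} ∪ tau p H i x) := by rw [this]; rfl
    omega
  · have h1 : tau p H i x = ∅ := by
      ext a
      simp only [tau, Set.mem_ofPred_eq, Set.mem_empty_iff_false, iff_false]
      rintro ⟨h, u, rfl, hu⟩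
      exact hne ⟨u, hu, h⟩
    have h2 : (acl p H x).ncard ≤ lam p {a | H a < i} := by
      apply Set.ncard_le_ncard _ (Set.toFinite _)
      rintro v ⟨u, hu, h⟩
      have h3 := hx u hu
      have h4 : H (p u) ≠ i := fun h => hne ⟨u, hu, h⟩
      simp only [Set.mem_preimage, Set.mem_ofPred_eq]
      rcases h with h | h
      · rw [← h]; omega
      · omega
    rw [h1]
    have : lam p (∅ : Set C) = 0 := by simp [lam]
    omega

theorem Vle_iff (p : ι → C) (H : C → ℕ) (i : ℕ) (x : ι → F) :
    Vle p H i x ↔ (acl p H x).ncard ≤ lam p {a | H a ≤ i} := by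
  constructor
  · intro hx
    apply Set.ncard_le_ncard _ (Set.toFinite _)
    rintro v ⟨u, hu, h⟩
    have h3 := hx u hu
    simp only [Set.mem_preimage, Set.mem_ofPred_eq]
    rcases h with h | h
    · rw [← h]; omega
    · omega
  · intro h u hu
    by_contra hc
    push Not at hc
    have : lam p {a | H a ≤ i} < (acl p H x).ncard := by
      apply Set.ncard_lt_ncard _ (Set.toFinite _)
      rw [Set.ssubset_iff_of_subset]
      · exact ⟨u, ⟨u, hu, Or.inl rfl⟩, by simpa using hc⟩
      · intro v hv
        simp only [Set.mem_preimage, Set.mem_ofPred_eq] at hv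
        exact ⟨u, hu, Or.inr (by omega)⟩
    omega

theorem W_zero (p : ι → C) (H : C → ℕ) (x : ι → F) (h : (acl p H x).ncard = 0) : x = 0 := by
  rw [Set.ncard_eq_zero (Set.toFinite _)] at h
  ext u
  by_contra hu
  have : u ∈ acl p H x := ⟨u, hu, Or.inl rfl⟩
  rw [h] at this
  exact this

theorem tau_ind (p : ι → C) (hp : Function.Surjective p) (H : C → ℕ) (i : ℕ) (S : Set C)
    (hS : S ⊆ {a | H a = i}) : tau p H i (ind F p S) = S := by
  ext a
  simp only [tau, ind, Set.mem_ofPred_eq]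
  constructor
  · rintro ⟨_, u, rfl, hu⟩
    exact Set.mem_of_indicator_ne_zero (s := Set.preimage p S) hu
  · intro ha
    obtain ⟨u, rfl⟩ := hp a
    refine ⟨hS ha, u, rfl, ?_⟩
    rw [Set.indicator_of_mem (by exact ha)]
    simp

theorem Vle_ind (p : ι → C) (H : C → ℕ) (i : ℕ) (S : Set C)
    (hS : S ⊆ {a | H a = i}) : Vle p H i (ind F p S) := by
  intro u hu
  exact (hS (Set.mem_of_indicator_ne_zero (s := Set.preimage p S) hu) : H (p u) = i).le

theorem key_singleton (p : ι → C) (hp : Function.Surjective p) (H : C → ℕ) (i : ℕ)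
    (T : (ι → F) ≃ₗ[F] (ι → F))
    (hV : ∀ z, Vle p H i z → Vle p H i (T z))
    (hL' : ∀ z, Vle p H i z → lam p (tau p H i (T.symm z)) = lam p (tau p H i z))
    (hL : ∀ z, Vle p H i z → lam p (tau p H i (T z)) = lam p (tau p H i z))
    (a : C) (ha : H a = i) : ∃ c, tau p H i (T (ind F p {a})) = {c} := by
  have hsa : ({a} : Set C) ⊆ {a | H a = i} := by simpa using ha
  have hVa := Vle_ind (F := F) p H i {a} hsa
  have hta := tau_ind (F := F) p hp H i {a} hsa
  set w := T (ind F p {a}) with hw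
  have hVw : Vle p H i w := hV _ hVa
  have hlw : lam p (tau p H i w) = lam p {a} := by rw [hw, hL _ hVa, hta]
  have hne : (tau p H i w).Nonempty := by
    by_contra hc
    rw [Set.not_nonempty_iff_eq_empty] at hc
    have := lam_pos p hp (Set.mem_singleton a)
    rw [← hlw, hc] at this
    simp [lam] at this
  obtain ⟨c, hc⟩ := hne
  refine ⟨c, ?_⟩
  let u : ι → F := (Set.preimage p {c}).indicator w
  let v : ι → F := (Set.preimage p {c})ᶜ.indicator w
  have huv : u + v = w := Set.indicator_self_add_compl _ _
  have hVu : Vle p H i u := fun k hk => hVw k (by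
    intro h0; apply hk; simp [u, Set.indicator, h0])
  have hVv : Vle p H i v := fun k hk => hVw k (by
    intro h0; apply hk; simp [v, Set.indicator, h0])
  have htu : tau p H i u = {c} := by
    ext b
    simp only [tau, Set.mem_ofPred_eq, Set.mem_singleton_iff]
    constructor
    · rintro ⟨_, k, rfl, hk⟩
      exact Set.mem_of_indicator_ne_zero (s := Set.preimage p {c}) hk
    · rintro rfl
      obtain ⟨h1, k, hk, hk0⟩ := hc
      refine ⟨h1, k, hk, ?_⟩
      simp only [u]
      rwa [Set.indicator_of_mem (by exact hk)]
  have htv : tau p H i v = tau p H i w \ {c} := by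
    ext b
    simp only [tau, Set.mem_ofPred_eq, Set.mem_singleton_iff, Set.mem_sdiff]
    constructor
    · rintro ⟨h1, k, rfl, hk⟩
      have h2 := Set.mem_of_indicator_ne_zero hk
      refine ⟨⟨h1, k, rfl, ?_⟩, h2⟩
      simp only [v] at hk
      rwa [Set.indicator_of_mem h2] at hk
    · rintro ⟨⟨h1, k, rfl, hk⟩, h2⟩
      refine ⟨h1, k, rfl, ?_⟩
      simp only [v]
      rwa [Set.indicator_of_mem (by exact h2)]
  have hsum : lam p {c} + lam p (tau p H i w \ {c}) = lam p {a} := by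
    rw [← lam_union p Set.disjoint_sdiff_right, ← hlw]
    congr 1
    rw [Set.union_sdiff_cancel]
    simpa using hc
  have hcpos := lam_pos p hp (Set.mem_singleton c)
  have hu' := hL' u hVu
  have hv' := hL' v hVv
  rw [htu] at hu'
  rw [htv] at hv'
  have hadd : T.symm u + T.symm v = ind F p {a} := by
    rw [← map_add, huv, hw, LinearEquiv.symm_apply_apply]
  obtain ⟨k, hk⟩ := hp a
  have hk1 : (T.symm u) k ≠ 0 ∨ (T.symm v) k ≠ 0 := by
    by_contra hcon
    push Not at hcon
    have := congrFun hadd k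
    simp only [Pi.add_apply, hcon.1, hcon.2, ind] at this
    rw [Set.indicator_of_mem (by exact hk)] at this
    simp at this
  have hmem : ∀ z : ι → F, z k ≠ 0 → lam p {a} ≤ lam p (tau p H i z) := by
    intro z hz
    apply lam_mono
    rw [Set.singleton_subset_iff]
    exact ⟨ha, k, hk, hz⟩
  rcases hk1 with h | h
  · have h1 := hmem _ h
    by_contra hne
    have : ∃ b, b ∈ tau p H i w \ {c} := by
      by_contra hno
      push Not at hno
      apply hne
      ext b
      constructor
      · intro hb
        by_contra hbc
        exact hno b ⟨hb, hbc⟩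
      · rintro rfl; exact hc
    obtain ⟨b, hb⟩ := this
    have := lam_pos p hp hb
    omega
  · have h1 := hmem _ h
    omega

theorem abs_forward [Finite C] (p : ι → C) (hp : Function.Surjective p) (H : C → ℕ)
    (htr : ∀ x y : ι → F, (acl p H x).ncard = (acl p H y).ncard →
      ∃ T : (ι → F) →ₗ[F] (ι → F), Function.Bijective T ∧
        (∀ z : ι → F, (acl p H (T z)).ncard = (acl p H z).ncard) ∧ T x = y)
    (i : ℕ) (S S' : Set C) (hS : S ⊆ {a | H a = i}) (hS' : S' ⊆ {a | H a = i})
    (hl : lam p S = lam p S') :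
    ∃ g : C → C, Set.BijOn g S S' ∧ ∀ a ∈ S, lam p {g a} = lam p {a} := by
  classical
  have hWW : (acl p H (ind F p S)).ncard = (acl p H (ind F p S')).ncard := by
    have key : ∀ S : Set C, S ⊆ {a | H a = i} → 0 < lam p S →
        (acl p H (ind F p S)).ncard = lam p {a | H a < i} + lam p S := by
      intro S hS h0
      have := W_sub p H i _ (Vle_ind (F := F) p H i S hS)
      rw [tau_ind p hp H i S hS] at this
      omega
    by_cases h0 : 0 < lam p S
    · rw [key S hS h0, key S' hS' (hl ▸ h0), hl]
    · have hemp : ∀ S : Set C, lam p S = 0 → S = ∅ := by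
        intro S h
        by_contra hne
        obtain ⟨a, ha⟩ := Set.nonempty_iff_ne_empty.2 hne
        have := lam_pos p hp ha
        omega
      rw [hemp S (by omega), hemp S' (by omega)]
  obtain ⟨T0, hbij, hiso, hT0⟩ := htr _ _ hWW
  let T : (ι → F) ≃ₗ[F] (ι → F) := LinearEquiv.ofBijective T0 hbij
  have hTapp : ∀ z, T z = T0 z := fun z => rfl
  have hisoT : ∀ z, (acl p H (T z)).ncard = (acl p H z).ncard := hiso
  have hisoT' : ∀ z, (acl p H (T.symm z)).ncard = (acl p H z).ncard := by
    intro z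
    rw [← hisoT, LinearEquiv.apply_symm_apply]
  have hV : ∀ z, Vle p H i z → Vle p H i (T z) := by
    intro z hz
    rw [Vle_iff] at hz ⊢
    rwa [hisoT]
  have hV' : ∀ z, Vle p H i z → Vle p H i (T.symm z) := by
    intro z hz
    rw [Vle_iff] at hz ⊢
    rwa [hisoT']
  have hL : ∀ z, Vle p H i z → lam p (tau p H i (T z)) = lam p (tau p H i z) := by
    intro z hz
    rw [← W_sub p H i _ hz, ← W_sub p H i _ (hV _ hz), hisoT]
  have hL' : ∀ z, Vle p H i z → lam p (tau p H i (T.symm z)) = lam p (tau p H i z) := by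
    intro z hz
    rw [← W_sub p H i _ hz, ← W_sub p H i _ (hV' _ hz), hisoT']
  have hsing := key_singleton p hp H i T hV hL' hL
  have hex : ∀ a, ∃ c, H a = i → tau p H i (T (ind F p {a})) = {c} := by
    intro a
    by_cases ha : H a = i
    · obtain ⟨c, hc⟩ := hsing a ha
      exact ⟨c, fun _ => hc⟩
    · exact ⟨a, fun h => absurd h ha⟩
  choose g hg using hex
  have hgL : ∀ a, H a = i → lam p {g a} = lam p {a} := by
    intro a ha
    have hsa : ({a} : Set C) ⊆ {a | H a = i} := by simpa using ha
    rw [← hg a ha, hL _ (Vle_ind p H i _ hsa), tau_ind p hp H i _ hsa]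
  have hginj : ∀ a b, H a = i → H b = i → g a = g b → a = b := by
    intro a b ha hb hab
    by_contra hne
    have hsab : ({a} ∪ {b} : Set C) ⊆ {a | H a = i} := by
      rintro c (rfl | rfl) <;> assumption
    have h1 : ind F p ({a} ∪ {b}) = ind F p {a} + ind F p {b} := by
      simp only [ind, Set.preimage_union]
      exact Set.indicator_union_of_disjoint (Disjoint.preimage p (by simpa using hne)) _
    have h2 : tau p H i (T (ind F p ({a} ∪ {b}))) ⊆ {g a} := by
      rintro c ⟨hc, k, hk, hk0⟩
      rw [h1, map_add, Pi.add_apply] at hk0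
      by_cases h3 : T (ind F p {a}) k = 0
      · have : c ∈ tau p H i (T (ind F p {b})) := by
          refine ⟨hc, k, hk, ?_⟩
          intro h4; apply hk0; rw [h3, h4, add_zero]
        rw [hg b hb, ← hab] at this
        exact this
      · have : c ∈ tau p H i (T (ind F p {a})) := ⟨hc, k, hk, h3⟩
        rwa [hg a ha] at this
    have h3 := lam_mono p h2
    rw [hL _ (Vle_ind p H i _ hsab), tau_ind p hp H i _ hsab,
      lam_union p (by simpa using hne), hgL a ha] at h3
    have := lam_pos p hp (Set.mem_singleton b)
    omega
  have hfin : S.Finite := Set.toFinite _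
  have hdec : ind F p S = ∑ a ∈ hfin.toFinset, ind F p {a} := by
    ext k
    rw [Finset.sum_apply]
    by_cases hk : p k ∈ S
    · rw [Finset.sum_eq_single (p k)]
      · simp [ind, hk]
      · intro b _ hb
        simp [ind, hb.symm]
      · simp [hk]
    · rw [Finset.sum_eq_zero]
      · simp [ind, hk]
      · intro a ha
        have : p k ≠ a := by
          rintro rfl; simp at ha; exact hk ha
        simp [ind, this]
  have hy : ∀ k, ind F p S' k = ∑ a ∈ hfin.toFinset, T (ind F p {a}) k := by
    intro k
    rw [← hT0, ← hTapp, hdec, map_sum, Finset.sum_apply]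
  have hnz : ∀ k a, H a = i → H (p k) = i → T (ind F p {a}) k ≠ 0 → p k = g a := by
    intro k a ha hk h
    have : p k ∈ tau p H i (T (ind F p {a})) := ⟨hk, k, rfl, h⟩
    rwa [hg a ha] at this
  refine ⟨g, ⟨?_, ?_, ?_⟩, fun a ha => hgL a (hS ha)⟩
  · intro a ha
    have hga : g a ∈ tau p H i (T (ind F p {a})) := by rw [hg a (hS ha)]; rfl
    obtain ⟨h1, k, hk, hk0⟩ := hga
    have hyk := hy k
    rw [Finset.sum_eq_single a] at hyk
    · rw [← hyk] at hk0
      rw [← hk]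
      exact Set.mem_of_indicator_ne_zero (s := Set.preimage p S') hk0
    · intro b hb hba
      by_contra hc
      have hbS : b ∈ S := by simpa using hb
      have h3 := hnz k b (hS hbS) (by rw [hk]; exact h1) hc
      exact hba (hginj b a (hS hbS) (hS ha) (by rw [← h3, hk]))
    · intro h; exact absurd (by simpa using ha) h
  · intro a ha b hb hab
    exact hginj a b (hS ha) (hS hb) hab
  · intro c hc
    obtain ⟨k, rfl⟩ := hp c
    have h1 : ind F p S' k ≠ 0 := by simp [ind, hc]
    rw [hy k] at h1
    obtain ⟨a, ha, hak⟩ := Finset.exists_ne_zero_of_sum_ne_zero h1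
    have haS : a ∈ S := by simpa using ha
    exact ⟨a, haS, (hnz k a (hS haS) (hS' hc) hak).symm⟩

theorem acl_mono_aux (p : ι → C) (H : C → ℕ) (i : ℕ) (z z' : ι → F)
    (h1 : ∀ u, z u ≠ 0 → i ≤ H (p u) → ∃ u', z' u' ≠ 0 ∧ p u' = p u)
    (h2 : (∃ u', z' u' ≠ 0 ∧ i ≤ H (p u')) ∨ z = z') : acl p H z ⊆ acl p H z' := by
  rintro v ⟨u, hu, h⟩
  by_cases hi : i ≤ H (p u)
  · obtain ⟨u', hu', he⟩ := h1 u hu hi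
    exact ⟨u', hu', by rw [he]; exact h⟩
  · rcases h2 with ⟨u', hu', hi'⟩ | rfl
    · refine ⟨u', hu', Or.inr ?_⟩
      rcases h with h | h
      · rw [← h]; omega
      · omega
    · exact ⟨u, hu, h⟩

/-- A functional on a block that is `1` on `x` and nonzero on `y`. -/
theorem exists_functional (p : ι → C) (b : C) (x y : ι → F)
    (hx : ∃ u, p u = b ∧ x u ≠ 0) (hy : ∃ u, p u = b ∧ y u ≠ 0) :
    ∃ f : (ι → F) →ₗ[F] F, f x = 1 ∧ f y ≠ 0 ∧
      ∀ z z' : ι → F, (∀ u, p u = b → z u = z' u) → f z = f z' := by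
  obtain ⟨j, hj, hxj⟩ := hx
  obtain ⟨k, hk, hyk⟩ := hy
  by_cases hyj : y j = 0
  · by_cases hxk : x k = 0
    · refine ⟨(x j)⁻¹ • LinearMap.proj j + LinearMap.proj k, ?_, ?_, ?_⟩
      · simp [hxk, hxj]
      · simp [hyj, hyk]
      · intro z z' h
        simp [h j hj, h k hk]
    · refine ⟨(x k)⁻¹ • LinearMap.proj k, ?_, ?_, ?_⟩
      · simp [hxk]
      · simp [hxk, hyk]
      · intro z z' h
        simp [h k hk]
  · refine ⟨(x j)⁻¹ • LinearMap.proj j, ?_, ?_, ?_⟩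
    · simp [hxj]
    · simp [hxj, hyj]
    · intro z z' h
      simp [h j hj]

theorem step_two (p : ι → C) (H : C → ℕ) (i : ℕ) (x y : ι → F)
    (hx : Vle p H i x) (hy : Vle p H i y) (ht : tau p H i x = tau p H i y)
    (hne : (tau p H i y).Nonempty) :
    ∃ T : (ι → F) →ₗ[F] (ι → F),
        (∀ z : ι → F, acl p H (T z) = acl p H z) ∧ T x = y := by
  classical
  obtain ⟨b0, hb0⟩ := hne
  have hex : ∀ b, ∃ f : (ι → F) →ₗ[F] F, b ∈ tau p H i y → f x = 1 ∧ f y ≠ 0 ∧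
      ∀ z z' : ι → F, (∀ u, p u = b → z u = z' u) → f z = f z' := by
    intro b
    by_cases hb : b ∈ tau p H i y
    · have hb' := hb
      rw [← ht] at hb'
      obtain ⟨f, hf⟩ := exists_functional p b x y hb'.2 hb.2
      exact ⟨f, fun _ => hf⟩
    · exact ⟨0, fun h => absurd h hb⟩
  choose f hf using hex
  let r : ι → C := fun v => if H (p v) = i then p v else b0
  let T : (ι → F) →ₗ[F] (ι → F) :=
    LinearMap.pi fun v => LinearMap.proj v + (y v - x v) • f (r v)
  have hT : ∀ z v, T z v = z v + (y v - x v) * f (r v) z := by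
    intro z v; simp [T]
  -- difference vanishes off the touched classes
  have hd : ∀ v, i ≤ H (p v) → p v ∉ tau p H i y → y v - x v = 0 := by
    intro v hv hn
    have h1 : y v = 0 := by
      by_contra h
      exact hn ⟨le_antisymm (hy v h) hv, v, rfl, h⟩
    have h2 : x v = 0 := by
      by_contra h
      exact hn (ht ▸ ⟨le_antisymm (hx v h) hv, v, rfl, h⟩)
    rw [h1, h2, sub_zero]
  have hf0 : ∀ b ∈ tau p H i y, ∀ z : ι → F, (∀ u, p u = b → z u = 0) → f b z = 0 := by
    intro b hb z hz
    rw [(hf b hb).2.2 z 0 (by simpa using hz), map_zero]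
  have hTb : ∀ b ∈ tau p H i y, ∀ z : ι → F, f b (T z) = f b z * f b y := by
    intro b hb z
    have h1 : f b (T z) = f b (z + f b z • (y - x)) := by
      apply (hf b hb).2.2
      intro u hu
      rw [hT]
      have : r u = b := by simp only [r]; rw [hu, if_pos hb.1]
      rw [this]
      simp [mul_comm]
    rw [h1, map_add, map_smul, map_sub, (hf b hb).1, smul_eq_mul]
    ring
  have hA : ∀ z u, z u ≠ 0 → i ≤ H (p u) → ∃ u', T z u' ≠ 0 ∧ p u' = p u := by
    intro z u hu hi
    by_cases hb : p u ∈ tau p H i y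
    · by_contra hc
      push Not at hc
      have h0 : ∀ u', p u' = p u → T z u' = 0 := by
        intro u' h; by_contra h'; exact hc u' h' h
      have h1 := hf0 _ hb _ h0
      rw [hTb _ hb] at h1
      have h2 : f (p u) z = 0 := (mul_eq_zero.1 h1).resolve_right (hf _ hb).2.1
      have h3 := h0 u rfl
      have : r u = p u := by simp only [r]; rw [if_pos hb.1]
      rw [hT, this, h2, mul_zero, add_zero] at h3
      exact hu h3
    · refine ⟨u, ?_, rfl⟩
      rwa [hT, hd u hi hb, zero_mul, add_zero]
  have hB : ∀ z u, T z u ≠ 0 → i ≤ H (p u) → ∃ u', z u' ≠ 0 ∧ p u' = p u := by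
    intro z u hu hi
    by_cases hb : p u ∈ tau p H i y
    · by_contra hc
      push Not at hc
      have h0 : ∀ u', p u' = p u → z u' = 0 := by
        intro u' h; by_contra h'; exact hc u' h' h
      have h1 := hf0 _ hb _ h0
      have : r u = p u := by simp only [r]; rw [if_pos hb.1]
      rw [hT, this, h1, mul_zero, add_zero] at hu
      exact hu (h0 u rfl)
    · refine ⟨u, ?_, rfl⟩
      rwa [hT, hd u hi hb, zero_mul, add_zero] at hu
  have hr : ∀ v, y v - x v ≠ 0 → r v ∈ tau p H i y := by
    intro v hv
    simp only [r]
    split_ifs with h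
    · by_contra hn
      exact hv (hd v h.ge hn)
    · exact hb0
  refine ⟨T, ?_, ?_⟩
  · intro z
    by_cases hz : ∃ u, z u ≠ 0 ∧ i ≤ H (p u)
    · obtain ⟨u, hu, hi⟩ := hz
      obtain ⟨u', hu', he⟩ := hA z u hu hi
      exact Set.Subset.antisymm (acl_mono_aux p H i _ _ (hB z) (Or.inl ⟨u, hu, hi⟩))
        (acl_mono_aux p H i _ _ (hA z) (Or.inl ⟨u', hu', by rw [he]; exact hi⟩))
    · congr 1
      ext v
      rw [hT]
      by_cases hv : y v - x v = 0
      · rw [hv, zero_mul, add_zero]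
      · have hrv := hr v hv
        rw [hf0 _ hrv z, mul_zero, add_zero]
        intro u hu
        by_contra hc
        exact hz ⟨u, hc, by rw [hu]; exact hrv.1.ge⟩
  · ext v
    rw [hT]
    by_cases hv : y v - x v = 0
    · rw [hv, zero_mul, add_zero]; exact (sub_eq_zero.1 hv).symm
    · rw [(hf _ (hr v hv)).1]; ring

theorem step_one (p : ι → C) (H : C → ℕ) (σ : Equiv.Perm C) (hσH : ∀ a, H (σ a) = H a)
    (hσL : ∀ a, lam p {σ a} = lam p {a}) :
    ∃ s : Equiv.Perm ι, (∀ v, p (s v) = σ (p v)) ∧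
      ∀ z : ι → F, (acl p H (z ∘ s.symm)).ncard = (acl p H z).ncard := by
  have hex : ∀ a, Nonempty ({v // p v = a} ≃ {v // p v = σ a}) := by
    intro a
    have h := hσL a
    unfold lam at h
    rw [← Nat.card_coe_set_eq, ← Nat.card_coe_set_eq] at h
    exact Finite.card_eq.1 h.symm
  let e := fun a => (hex a).some
  let s : Equiv.Perm ι := (Equiv.sigmaFiberEquiv p).symm.trans
    ((Equiv.sigmaCongr σ e).trans (Equiv.sigmaFiberEquiv p))
  have hs : ∀ v, p (s v) = σ (p v) := fun v => (e (p v) ⟨v, rfl⟩).2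
  refine ⟨s, hs, ?_⟩
  intro z
  have : acl p H (z ∘ s.symm) = Set.image s (acl p H z) := by
    ext v
    obtain ⟨v, rfl⟩ := s.surjective v
    rw [s.injective.mem_set_image]
    simp only [acl, Set.mem_ofPred_eq]
    constructor
    · rintro ⟨u, hu, h⟩
      obtain ⟨u, rfl⟩ := s.surjective u
      refine ⟨u, by simpa using hu, ?_⟩
      simpa [hs, hσH] using h
    · rintro ⟨u, hu, h⟩
      refine ⟨s u, by simpa using hu, ?_⟩
      simpa [hs, hσH] using h
  rw [this, Set.ncard_image_of_injective _ s.injective]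

theorem abs_backward [Finite C] (p : ι → C) (H : C → ℕ)
    (hU : ∀ (i : ℕ) (S S' : Set C), S ⊆ {a | H a = i} → S' ⊆ {a | H a = i} →
      lam p S = lam p S' →
      ∃ g : C → C, Set.BijOn g S S' ∧ ∀ a ∈ S, lam p {g a} = lam p {a})
    (x y : ι → F) (hW : (acl p H x).ncard = (acl p H y).ncard) :
      ∃ T : (ι → F) →ₗ[F] (ι → F), Function.Bijective T ∧
        (∀ z : ι → F, (acl p H (T z)).ncard = (acl p H z).ncard) ∧ T x = y := by
  classical
  by_cases hx0 : x = 0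
  · subst hx0
    have : y = 0 := by
      apply W_zero p H
      rw [← hW]
      simp [acl]
    exact ⟨LinearMap.id, Function.bijective_id, fun _ => rfl, this.symm⟩
  obtain ⟨u0, hu0⟩ : ∃ u, x u ≠ 0 := Function.ne_iff.1 hx0
  obtain ⟨u, hu, hmax⟩ := Set.exists_max_image {u | x u ≠ 0} (fun u => H (p u))
    (Set.toFinite _) ⟨u0, hu0⟩
  set i := H (p u) with hi
  have hVx : Vle p H i x := fun v hv => hmax v hv
  have hVy : Vle p H i y := by
    rw [Vle_iff] at hVx ⊢
    rwa [← hW]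
  have hlam : lam p (tau p H i x) = lam p (tau p H i y) := by
    rw [← W_sub p H i x hVx, ← W_sub p H i y hVy, hW]
  have hxne : (tau p H i x).Nonempty := ⟨p u, rfl, u, rfl, hu⟩
  set A := tau p H i x with hA
  set B := tau p H i y with hB
  have hAl : A ⊆ {a | H a = i} := fun a ha => ha.1
  have hBl : B ⊆ {a | H a = i} := fun a ha => ha.1
  obtain ⟨g, hg, hgL⟩ := hU i A B hAl hBl hlam
  have hlam' : lam p ({a | H a = i} \ A) = lam p ({a | H a = i} \ B) := by
    have h1 := lam_union p (Set.disjoint_sdiff_right (s := A) (t := {a | H a = i}))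
    have h2 := lam_union p (Set.disjoint_sdiff_right (s := B) (t := {a | H a = i}))
    rw [Set.union_sdiff_cancel hAl] at h1
    rw [Set.union_sdiff_cancel hBl] at h2
    omega
  obtain ⟨g', hg', hgL'⟩ := hU i _ _ Set.sdiff_subset Set.sdiff_subset hlam'
  let σ0 : C → C := fun a => if a ∈ A then g a else if H a = i then g' a else a
  have h1 : ∀ a ∈ A, σ0 a = g a := fun a ha => by simp [σ0, ha]
  have h2 : ∀ a, a ∉ A → H a = i → σ0 a = g' a := fun a ha hi => by simp [σ0, ha, hi]
  have h3 : ∀ a, H a ≠ i → σ0 a = a := fun a hi' => by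
    have : a ∉ A := fun h => hi' (hAl h)
    simp [σ0, this, hi']
  have m1 : ∀ a ∈ A, σ0 a ∈ B := fun a ha => by rw [h1 a ha]; exact hg.1 ha
  have m2 : ∀ a, a ∉ A → H a = i → σ0 a ∈ {a | H a = i} \ B := fun a ha hi => by
    rw [h2 a ha hi]; exact hg'.1 ⟨hi, ha⟩
  have hσH : ∀ a, H (σ0 a) = H a := by
    intro a
    by_cases hai : H a = i
    · by_cases ha : a ∈ A
      · rw [hai]; exact hBl (m1 a ha)
      · rw [hai]; exact (m2 a ha hai).1
    · rw [h3 a hai]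
  have hmB : ∀ a, σ0 a ∈ B ↔ a ∈ A := by
    intro a
    refine ⟨fun h => ?_, m1 a⟩
    by_contra ha
    have hai : H a = i := by rw [← hσH]; exact hBl h
    exact (m2 a ha hai).2 h
  have hinj : Function.Injective σ0 := by
    intro a b hab
    have hH : H a = H b := by rw [← hσH a, hab, hσH]
    by_cases hai : H a = i
    · by_cases ha : a ∈ A
      · have hb : b ∈ A := by rw [← hmB, ← hab, hmB]; exact ha
        rw [h1 a ha, h1 b hb] at hab
        exact hg.2.1 ha hb hab
      · have hb : b ∉ A := by rw [← hmB, ← hab, hmB]; exact ha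
        rw [h2 a ha hai, h2 b hb (hH ▸ hai)] at hab
        exact hg'.2.1 ⟨hai, ha⟩ ⟨hH.symm.trans hai, hb⟩ hab
    · rwa [h3 a hai, h3 b (hH ▸ hai)] at hab
  let σ : Equiv.Perm C := Equiv.ofBijective σ0 (Finite.injective_iff_bijective.1 hinj)
  have hσL : ∀ a, lam p {σ a} = lam p {a} := by
    intro a
    change lam p {σ0 a} = _
    by_cases hai : H a = i
    · by_cases ha : a ∈ A
      · rw [h1 a ha, hgL a ha]
      · rw [h2 a ha hai, hgL' a ⟨hai, ha⟩]
    · rw [h3 a hai]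
  obtain ⟨s, hs, hsW⟩ := step_one (F := F) p H σ hσH hσL
  have hσ : ∀ a, σ a = σ0 a := fun a => rfl
  have hV1 : Vle p H i (x ∘ s.symm) := by
    rw [Vle_iff] at hVx ⊢
    rwa [hsW]
  have ht1 : tau p H i (x ∘ s.symm) = tau p H i y := by
    rw [← hB]
    ext b
    obtain ⟨a, rfl⟩ := σ.surjective b
    rw [hσ, hmB, hA]
    simp only [tau, Set.mem_ofPred_eq, hσH, Function.comp_apply]
    constructor
    · rintro ⟨h, v, hv, hv0⟩
      obtain ⟨v, rfl⟩ := s.surjective v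
      refine ⟨h, v, hinj ?_, by simpa using hv0⟩
      rw [← hv, hs]; rfl
    · rintro ⟨h, v, hv, hv0⟩
      exact ⟨h, s v, by rw [hs, hv]; rfl, by simpa using hv0⟩
  have hBne : (tau p H i y).Nonempty := by
    obtain ⟨a, ha⟩ := hxne
    exact ⟨_, m1 a ha⟩
  obtain ⟨T2, hT2, hT2x⟩ := step_two p H i _ y hV1 hVy ht1 hBne
  let T1 : (ι → F) →ₗ[F] (ι → F) := LinearMap.funLeft F F s.symm
  have hT1 : ∀ z, T1 z = z ∘ s.symm := fun z => rfl
  have hiso : ∀ z : ι → F, (acl p H ((T2 ∘ₗ T1) z)).ncard = (acl p H z).ncard := by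
    intro z
    rw [LinearMap.comp_apply, hT2, hT1, hsW]
  have hTinj : Function.Injective (T2 ∘ₗ T1) := by
    rw [← LinearMap.ker_eq_bot, LinearMap.ker_eq_bot']
    intro z hz
    apply W_zero p H
    rw [← hiso, hz]
    simp [acl]
  refine ⟨T2 ∘ₗ T1, ⟨hTinj, LinearMap.injective_iff_surjective.1 hTinj⟩, hiso, ?_⟩
  rw [LinearMap.comp_apply, hT1, hT2x]

end Abstract

section Concrete

variable {n : ℕ} (E : Fin n → Fin n → Prop)

instance vredFinite : Finite (Vred E) := inferInstanceAs (Finite (Quotient (cliqueSetoid E)))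

theorem gpi_surj : Function.Surjective (gpi E) := Quotient.mk_surjective

theorem gpi_eq {u v : Fin n} : gpi E u = gpi E v ↔ gdom E u v ∧ gdom E v u :=
  Quotient.eq (r := cliqueSetoid E)

theorem ple_gpi {u v : Fin n} : ple E (gpi E v) (gpi E u) ↔ gdom E u v := by
  constructor
  · rintro ⟨u', v', hv, hu, h⟩
    rw [gpi_eq] at hv hu
    exact (hu.2.trans h).trans hv.1
  · intro h
    exact ⟨u, v, rfl, rfl, h⟩

/-- The partial order of `P_G`. -/
@[reducible] def vredOrder : PartialOrder (Vred E) where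
  le := ple E
  le_refl a := by
    obtain ⟨u, rfl⟩ := gpi_surj E a
    exact (ple_gpi E).2 Relation.ReflTransGen.refl
  le_trans a b c := by
    obtain ⟨u, rfl⟩ := gpi_surj E a
    obtain ⟨v, rfl⟩ := gpi_surj E b
    obtain ⟨w, rfl⟩ := gpi_surj E c
    rw [ple_gpi, ple_gpi, ple_gpi]
    exact fun h1 h2 => h2.trans h1
  le_antisymm a b := by
    obtain ⟨u, rfl⟩ := gpi_surj E a
    obtain ⟨v, rfl⟩ := gpi_surj E b
    rw [ple_gpi, ple_gpi, gpi_eq]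
    exact fun h1 h2 => ⟨h2, h1⟩

theorem hgt_bdd (a : Vred E) : BddAbove {k | ∃ c : Set (Vred E), c.ncard = k ∧ a ∈ c ∧
    (∀ x ∈ c, ple E x a) ∧ ∀ x ∈ c, ∀ y ∈ c, ple E x y ∨ ple E y x} := by
  refine ⟨Nat.card (Vred E), ?_⟩
  rintro k ⟨c, rfl, _⟩
  rw [← Set.ncard_univ]
  exact Set.ncard_le_ncard (Set.subset_univ _) (Set.toFinite _)

theorem le_hgt (a : Vred E) (c : Set (Vred E)) (h1 : a ∈ c) (h2 : ∀ x ∈ c, ple E x a)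
    (h3 : ∀ x ∈ c, ∀ y ∈ c, ple E x y ∨ ple E y x) : c.ncard ≤ hgt E a :=
  le_csSup (hgt_bdd E a) ⟨c, rfl, h1, h2, h3⟩

theorem one_mem (a : Vred E) : ∃ c : Set (Vred E), c.ncard = 1 ∧ a ∈ c ∧
    (∀ x ∈ c, ple E x a) ∧ ∀ x ∈ c, ∀ y ∈ c, ple E x y ∨ ple E y x := by
  let _ := vredOrder E
  refine ⟨{a}, Set.ncard_singleton a, rfl, ?_, ?_⟩
  · rintro x rfl; exact le_refl x
  · rintro x rfl y rfl; exact Or.inl (le_refl y)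

theorem hgt_chain (a : Vred E) : ∃ c : Set (Vred E), c.ncard = hgt E a ∧ a ∈ c ∧
    (∀ x ∈ c, ple E x a) ∧ ∀ x ∈ c, ∀ y ∈ c, ple E x y ∨ ple E y x :=
  Nat.sSup_mem ⟨1, one_mem E a⟩ (hgt_bdd E a)

theorem one_le_hgt (a : Vred E) : 1 ≤ hgt E a := by
  obtain ⟨c, h, h1, h2, h3⟩ := one_mem E a
  rw [← h]
  exact le_hgt E a c h1 h2 h3

theorem hgt_lt {a b : Vred E} (hab : ple E a b) (hne : a ≠ b) : hgt E a < hgt E b := by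
  let _ := vredOrder E
  obtain ⟨c, h, h1, h2, h3⟩ := hgt_chain E a
  have hb : b ∉ c := fun hb => hne (le_antisymm (show a ≤ b from hab) (h2 b hb))
  have h4 : (insert b c).ncard = c.ncard + 1 := Set.ncard_insert_of_notMem hb (Set.toFinite _)
  have hle : ∀ x ∈ insert b c, ple E x b := by
    rintro x (rfl | hx)
    · exact le_refl x
    · exact le_trans (show x ≤ a from h2 x hx) hab
  have := le_hgt E b (insert b c) (Set.mem_insert _ _) hle (by
    rintro x hx y (rfl | hy)
    · exact Or.inl (hle x hx)
    · rcases hx with rfl | hx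
      · exact Or.inr (hle y (Or.inr hy))
      · exact h3 x hx y hy)
  omega

theorem exists_pred (a : Vred E) (ha : 1 < hgt E a) :
    ∃ b, ple E b a ∧ hgt E b + 1 = hgt E a := by
  let _ := vredOrder E
  obtain ⟨c, h, h1, h2, h3⟩ := hgt_chain E a
  have h4 : (c \ {a}).ncard + 1 = c.ncard := Set.ncard_sdiff_singleton_add_one h1 (Set.toFinite _)
  have hne : (c \ {a}).Nonempty := by
    rw [← Set.ncard_pos (Set.toFinite _)]; omega
  obtain ⟨b, hb⟩ := (Set.toFinite (c \ {a})).exists_maximal hne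
  have hbm := hb.prop
  have h5 : ∀ x ∈ c \ {a}, ple E x b := by
    intro x hx
    rcases h3 x hx.1 b hbm.1 with h | h
    · exact h
    · exact hb.le_of_ge hx h
  have h6 := le_hgt E b (c \ {a}) hbm h5 (fun x hx y hy => h3 x hx.1 y hy.1)
  have h7 := hgt_lt E (h2 b hbm.1) hbm.2
  exact ⟨b, h2 b hbm.1, by omega⟩

theorem ple_of_hgt_lt (hh : Hierarchical E) : ∀ (k : ℕ) (a b : Vred E), hgt E a = k →
    hgt E b < hgt E a → ple E b a := by
  let _ := vredOrder E
  intro k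
  induction k with
  | zero => intro a b h h'; omega
  | succ k ih =>
    intro a b hk hlt
    have hb1 := one_le_hgt E b
    by_cases hb : hgt E b + 1 = hgt E a
    · exact (hh a b (by omega) hb).1
    · obtain ⟨c, hca, hc⟩ := exists_pred E a (by omega)
      have := ih c b (by omega) (by omega)
      exact le_trans (show b ≤ c from this) hca

theorem gclosure_eq {F : Type*} [Field F] (hh : Hierarchical E) (x : Fin n → F) :
    gclosure E {i | x i ≠ 0} = acl (gpi E) (hgt E) x := by
  ext v
  simp only [gclosure, acl, Set.mem_ofPred_eq]
  refine exists_congr fun u => and_congr_right fun _ => ?_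
  change gdom E u v ↔ _
  constructor
  · intro h
    by_cases he : gpi E u = gpi E v
    · exact Or.inl he
    · exact Or.inr (hgt_lt E ((ple_gpi E).2 h) (Ne.symm he))
  · rintro (h | h)
    · exact ((gpi_eq E).1 h).1
    · exact (ple_gpi E).1 (ple_of_hgt_lt E hh _ _ _ rfl h)

theorem finsum_lwt (S : Set (Vred E)) : (∑ᶠ a ∈ S, lwt E a) = lam (gpi E) S := by
  classical
  rw [finsum_mem_eq_finite_toFinset_sum _ (Set.toFinite S)]
  unfold lam
  rw [Set.ncard_eq_toFinset_card _ (Set.toFinite _),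
    Finset.card_eq_sum_card_fiberwise (f := gpi E) (t := (Set.toFinite S).toFinset)]
  · apply Finset.sum_congr rfl
    intro a ha
    unfold lwt
    rw [Set.ncard_eq_toFinset_card _ (Set.toFinite _)]
    congr 1
    ext v
    simp only [Set.Finite.mem_toFinset, Set.mem_ofPred_eq, Finset.mem_filter, Set.mem_preimage]
      at ha ⊢
    constructor
    · rintro rfl; exact ⟨ha, rfl⟩
    · exact fun h => h.2
  · intro v hv
    simpa using hv

end Concrete

/-- for a graph whose reduced canonical form determines a hierarchical
poset, the group of linear `G`-isometries of `F_q^n` acts transitively on the spheres of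
`(F_q^n, d_G)` iff `G` satisfies the Unique Decomposition Property. -/
theorem stmt_15 {n : ℕ} (hn : 1 ≤ n) {F : Type*} [Field F] [Fintype F]
    (E : Fin n → Fin n → Prop) (hE : Irreflexive E) (hh : Hierarchical E) :
    (∀ x y : Fin n → F, gweight E x = gweight E y →
      ∃ T : (Fin n → F) →ₗ[F] (Fin n → F), Function.Bijective T ∧
        (∀ z : Fin n → F, gweight E (T z) = gweight E z) ∧ T x = y) ↔ UDP E := by
  have hg : ∀ z : Fin n → F, gweight E z = (acl (gpi E) (hgt E) z).ncard := by
    intro z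
    rw [gweight, gclosure_eq E hh]
  have hl : ∀ a, lwt E a = lam (gpi E) {a} := fun a => rfl
  simp only [hg]
  unfold UDP
  simp only [finsum_lwt]
  simp only [hl]
  constructor
  · intro h i S S' hS hS' hSS
    exact abs_forward (gpi E) (gpi_surj E) (hgt E) h i S S' hS hS' hSS
  · intro hU x y hxy
    exact abs_backward (gpi E) (hgt E) hU x y hxy
end

section
/- Let G be a directed graph on [n]. The poset P_G determined by its reduced canonical form is hierarchical if and only if every linear code D ⊆ F_q^n admits a G-canonical decomposition, i.e., D is G-equivalent to a code D_1 ⊕ ⋯ ⊕ D_{h_G} where supp(D_i) ⊆ V_i for each level i. -/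
namespace S17

variable {n : ℕ} {E : Fin n → Fin n → Prop}

lemma gpi_eq {u v : Fin n} : gpi E u = gpi E v ↔ gdom E u v ∧ gdom E v u :=
  ⟨fun h => Quotient.exact h, fun h => Quotient.sound h⟩

lemma gpi_surj (a : Vred E) : ∃ u, gpi E u = a := Quotient.exists_rep a

lemma ple_gpi {u v : Fin n} : ple E (gpi E v) (gpi E u) ↔ gdom E u v := by
  constructor
  · rintro ⟨u', v', hv, hu, h⟩
    exact ((gpi_eq.1 hu).2.trans h).trans (gpi_eq.1 hv).1
  · intro h
    exact ⟨u, v, rfl, rfl, h⟩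

lemma ple_refl (a : Vred E) : ple E a a := by
  obtain ⟨u, rfl⟩ := gpi_surj a
  exact ple_gpi.2 Relation.ReflTransGen.refl

lemma ple_trans {a b c : Vred E} (h : ple E a b) (h' : ple E b c) : ple E a c := by
  obtain ⟨u, rfl⟩ := gpi_surj a
  obtain ⟨v, rfl⟩ := gpi_surj b
  obtain ⟨w, rfl⟩ := gpi_surj c
  rw [ple_gpi] at *
  exact h'.trans h

lemma ple_antisymm {a b : Vred E} (h : ple E a b) (h' : ple E b a) : a = b := by
  obtain ⟨u, rfl⟩ := gpi_surj a
  obtain ⟨v, rfl⟩ := gpi_surj b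
  rw [ple_gpi] at *
  exact gpi_eq.2 ⟨h', h⟩

instance : Finite (Vred E) := Quotient.finite _

/-- chains with top element `a` -/
def IsCh (E : Fin n → Fin n → Prop) (a : Vred E) (c : Set (Vred E)) : Prop :=
  a ∈ c ∧ (∀ x ∈ c, ple E x a) ∧ ∀ x ∈ c, ∀ y ∈ c, ple E x y ∨ ple E y x

lemma hgt_bdd (a : Vred E) : BddAbove {k | ∃ c : Set (Vred E), c.ncard = k ∧ a ∈ c ∧
    (∀ x ∈ c, ple E x a) ∧ ∀ x ∈ c, ∀ y ∈ c, ple E x y ∨ ple E y x} := by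
  refine ⟨Nat.card (Vred E), ?_⟩
  rintro k ⟨c, rfl, -⟩
  exact Set.ncard_le_card c

lemma IsCh.le_hgt {a : Vred E} {c : Set (Vred E)} (h : IsCh E a c) : c.ncard ≤ hgt E a :=
  le_csSup (hgt_bdd a) ⟨c, rfl, h⟩

lemma isCh_singleton (a : Vred E) : IsCh E a {a} := by
  refine ⟨rfl, ?_, ?_⟩
  · rintro x rfl; exact ple_refl _
  · rintro x rfl y rfl; exact Or.inl (ple_refl _)

lemma exists_ch (a : Vred E) : ∃ c, IsCh E a c ∧ c.ncard = hgt E a := by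
  have hne : {k | ∃ c : Set (Vred E), c.ncard = k ∧ a ∈ c ∧ (∀ x ∈ c, ple E x a) ∧
      ∀ x ∈ c, ∀ y ∈ c, ple E x y ∨ ple E y x}.Nonempty := ⟨_, {a}, rfl, isCh_singleton a⟩
  obtain ⟨c, hc, h⟩ := Nat.sSup_mem hne (hgt_bdd a)
  exact ⟨c, h, hc⟩

lemma one_le_hgt (a : Vred E) : 1 ≤ hgt E a := by
  simpa using (isCh_singleton a).le_hgt

lemma hgt_lt {a b : Vred E} (h : ple E b a) (hne : b ≠ a) : hgt E b < hgt E a := by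
  obtain ⟨c, hc, hcard⟩ := exists_ch b
  have ha : a ∉ c := fun hm => hne (ple_antisymm h (hc.2.1 a hm))
  have hle : ∀ x ∈ c, ple E x a := fun x hx => ple_trans (hc.2.1 x hx) h
  have : IsCh E a (insert a c) := by
    refine ⟨Set.mem_insert _ _, ?_, ?_⟩
    · rintro x (rfl | hx)
      · exact ple_refl _
      · exact hle x hx
    · rintro x (rfl | hx) y (rfl | hy)
      · exact Or.inl (ple_refl _)
      · exact Or.inr (hle y hy)
      · exact Or.inl (hle x hx)
      · exact hc.2.2 x hx y hy
  have h2 := this.le_hgt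
  rw [Set.ncard_insert_of_notMem ha (Set.toFinite c)] at h2
  omega

lemma hgt_mono {a b : Vred E} (h : ple E b a) : hgt E b ≤ hgt E a := by
  by_cases hne : b = a
  · rw [hne]
  · exact (hgt_lt h hne).le

lemma chain_max (c : Set (Vred E)) (hne : c.Nonempty)
    (hc : ∀ x ∈ c, ∀ y ∈ c, ple E x y ∨ ple E y x) : ∃ b ∈ c, ∀ x ∈ c, ple E x b := by
  obtain ⟨b, hb, hmax⟩ := Set.exists_max_image c (hgt E) (Set.toFinite c) hne
  refine ⟨b, hb, fun x hx => ?_⟩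
  rcases hc x hx b hb with h | h
  · exact h
  · by_cases hbx : b = x
    · rw [hbx]; exact ple_refl _
    · have := hgt_lt h hbx
      have := hmax x hx
      omega

lemma exists_pred {a : Vred E} (h : 1 < hgt E a) : ∃ b, ple E b a ∧ hgt E b + 1 = hgt E a := by
  obtain ⟨c, hc, hcard⟩ := exists_ch a
  have hd : (c \ {a}).ncard + 1 = c.ncard := Set.ncard_sdiff_singleton_add_one hc.1 (Set.toFinite c)
  have hne : (c \ {a}).Nonempty := by
    rw [← Set.ncard_pos (Set.toFinite _)]; omega
  have hch : ∀ x ∈ c \ {a}, ∀ y ∈ c \ {a}, ple E x y ∨ ple E y x :=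
    fun x hx y hy => hc.2.2 x hx.1 y hy.1
  obtain ⟨b, hb, hmax⟩ := chain_max _ hne hch
  have h1 : IsCh E b (c \ {a}) := ⟨hb, hmax, hch⟩
  have h2 := h1.le_hgt
  have h3 := hgt_lt (hc.2.1 b hb.1) hb.2
  exact ⟨b, hc.2.1 b hb.1, by omega⟩

lemma hgt_le_map (f : Vred E → Vred E) (hf : Function.Injective f)
    (hm : ∀ x y, ple E x y → ple E (f x) (f y)) (a : Vred E) : hgt E a ≤ hgt E (f a) := by
  obtain ⟨c, hc, hcard⟩ := exists_ch a
  have : IsCh E (f a) (Set.image f c) := by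
    refine ⟨Set.mem_image_of_mem _ hc.1, ?_, ?_⟩
    · rintro _ ⟨x, hx, rfl⟩
      exact hm _ _ (hc.2.1 x hx)
    · rintro _ ⟨x, hx, rfl⟩ _ ⟨y, hy, rfl⟩
      exact (hc.2.2 x hx y hy).imp (hm _ _) (hm _ _)
  have h2 := this.le_hgt
  rw [Set.ncard_image_of_injective _ hf] at h2
  omega

lemma hier_lt (H : Hierarchical E) : ∀ (k : ℕ) (a b : Vred E), hgt E a = k → hgt E b < hgt E a →
    ple E b a := by
  intro k
  induction k with
  | zero => intro a b h h'; omega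
  | succ k ih =>
    intro a b h h'
    have hb := one_le_hgt b
    obtain ⟨c, hca, hc⟩ := exists_pred (a := a) (by omega)
    by_cases hbc : hgt E b = hgt E c
    · exact (H a b (by omega) (by omega)).1
    · exact ple_trans (ih c b (by omega) (by omega)) hca

/-- principal down-set of a vertex -/
def dn (E : Fin n → Fin n → Prop) (u : Fin n) : Set (Fin n) := {v | gdom E u v}

lemma mem_dn_self (u : Fin n) : u ∈ dn E u := Relation.ReflTransGen.refl

lemma dn_sub {u v : Fin n} (h : v ∈ dn E u) : dn E v ⊆ dn E u :=
  fun _ hw => Relation.ReflTransGen.trans h hw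

lemma dn_eq_of {u v : Fin n} (h : v ∈ dn E u) (hc : (dn E u).ncard ≤ (dn E v).ncard) :
    dn E v = dn E u :=
  Set.eq_of_subset_of_ncard_le (dn_sub h) hc (Set.toFinite _)

variable {F : Type*} [Field F]

/-- support closure -/
abbrev cl (E : Fin n → Fin n → Prop) (x : Fin n → F) : Set (Fin n) := gclosure E {i | x i ≠ 0}

lemma dn_sub_cl {x : Fin n → F} {u : Fin n} (h : x u ≠ 0) : dn E u ⊆ cl E x :=
  fun _ hv => ⟨u, h, hv⟩

lemma cl_sub_dn {x : Fin n → F} {u : Fin n} (h : ∀ i, x i ≠ 0 → i ∈ dn E u) : cl E x ⊆ dn E u := by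
  rintro v ⟨w, hw, hv⟩
  exact dn_sub (h w hw) hv

lemma weight_le {x : Fin n → F} {u : Fin n} (h : ∀ i, x i ≠ 0 → i ∈ dn E u) :
    gweight E x ≤ (dn E u).ncard := Set.ncard_le_ncard (cl_sub_dn h) (Set.toFinite _)

lemma weight_eq {x : Fin n → F} {u : Fin n} (h : ∀ i, x i ≠ 0 → i ∈ dn E u) (hu : x u ≠ 0) :
    gweight E x = (dn E u).ncard := by
  have : cl E x = dn E u := Set.Subset.antisymm (cl_sub_dn h) (dn_sub_cl hu)
  exact congrArg Set.ncard this

/-- isometry predicate -/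
def Iso (E : Fin n → Fin n → Prop) (T : (Fin n → F) ≃ₗ[F] (Fin n → F)) : Prop :=
  ∀ z, gweight E (T z) = gweight E z

lemma Iso.symm {T : (Fin n → F) ≃ₗ[F] (Fin n → F)} (h : Iso E T) : Iso E T.symm := by
  intro z
  rw [← h (T.symm z), T.apply_symm_apply]

lemma single_supp (u i : Fin n) (h : (Pi.single u (1 : F) : Fin n → F) i ≠ 0) : i = u := by
  by_contra hne
  exact h (Pi.single_eq_of_ne hne _)

lemma single_supp_dn (u i : Fin n) (h : (Pi.single u (1 : F) : Fin n → F) i ≠ 0) :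
    i ∈ dn E u := by
  rw [single_supp u i h]; exact mem_dn_self u

lemma key (k : ℕ) : ∀ (T : (Fin n → F) ≃ₗ[F] (Fin n → F)), Iso E T → ∀ u, (dn E u).ncard = k →
    ∃ w, (dn E w).ncard = k ∧ ∀ x : Fin n → F, (∀ i, x i ≠ 0 → i ∈ dn E u) →
      ∀ i, T x i ≠ 0 → i ∈ dn E w := by
  induction k using Nat.strong_induction_on with
  | _ k ih =>
  intro T hT u hu
  have A : ∀ x : Fin n → F, (∀ i, x i ≠ 0 → i ∈ dn E u) → x u ≠ 0 →
      ∃ w, T x w ≠ 0 ∧ (∀ i, T x i ≠ 0 → i ∈ dn E w) ∧ (dn E w).ncard = k := by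
    intro x hx hxu
    have hw : (cl E (T x)).ncard = k := by
      have := hT x
      rw [weight_eq hx hxu, hu] at this
      exact this
    by_cases hbig : ∃ w, T x w ≠ 0 ∧ k ≤ (dn E w).ncard
    · obtain ⟨w, hw1, hw2⟩ := hbig
      have heq : dn E w = cl E (T x) :=
        Set.eq_of_subset_of_ncard_le (dn_sub_cl hw1) (by omega) (Set.toFinite _)
      refine ⟨w, hw1, ?_, by rw [heq, hw]⟩
      intro i hi
      rw [heq]
      exact dn_sub_cl hi (mem_dn_self i)
    · exfalso
      push Not at hbig
      have h1 : x = ∑ w, (T x w) • T.symm (Pi.single w 1) := by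
        apply T.injective
        rw [map_sum]
        simp only [map_smul, LinearEquiv.apply_symm_apply]
        ext i
        simp [Finset.sum_apply, Pi.single_apply]
      have h2 : x u = ∑ w, (T x w) * T.symm (Pi.single w 1) u := by
        conv_lhs => rw [h1]
        simp [Finset.sum_apply]
      rw [h2] at hxu
      obtain ⟨w, -, hw⟩ := Finset.exists_ne_zero_of_sum_ne_zero hxu
      have hw1 := left_ne_zero_of_mul hw
      have hw2 := right_ne_zero_of_mul hw
      obtain ⟨w', hc, hw'⟩ := ih _ (hbig w hw1) T.symm hT.symm w rfl
      have hmem := hw' _ (single_supp_dn w) u hw2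
      have := Set.ncard_le_ncard (dn_sub hmem) (Set.toFinite _)
      have := hbig w hw1
      omega
  have hsu : (Pi.single u (1 : F) : Fin n → F) u ≠ 0 := by simp
  obtain ⟨w0, hw0, hs0, hc0⟩ := A (Pi.single u 1) (single_supp_dn u) hsu
  have B : ∀ x : Fin n → F, (∀ i, x i ≠ 0 → i ∈ dn E u) → x u ≠ 0 →
      ∀ i, T x i ≠ 0 → i ∈ dn E w0 := by
    intro x hx hxu
    obtain ⟨w, hw, hs, hc⟩ := A x hx hxu
    have hmem : w0 ∈ dn E w := by
      by_contra hn0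
      have hn1 : w ∉ dn E w0 := fun h => hn0 (by
        rw [dn_eq_of h (by omega)]; exact mem_dn_self _)
      have hx0 : T x w0 = 0 := by by_contra h; exact hn0 (hs _ h)
      have he0 : T (Pi.single u 1) w = 0 := by by_contra h; exact hn1 (hs0 _ h)
      have hle : gweight E (T (x + Pi.single u 1)) ≤ k := by
        rw [hT, ← hu]
        apply weight_le
        intro i hi
        by_cases h : x i = 0
        · rw [Pi.add_apply, h, zero_add] at hi
          exact single_supp_dn u i hi
        · exact hx i h
      have s1 : dn E w ⊆ cl E (T (x + Pi.single u 1)) := dn_sub_cl (by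
        rw [map_add, Pi.add_apply, he0, add_zero]; exact hw)
      have s2 : w0 ∈ cl E (T (x + Pi.single u 1)) := dn_sub_cl (u := w0) (by
        rw [map_add, Pi.add_apply, hx0, zero_add]; exact hw0) (mem_dn_self _)
      have h3 := Set.ncard_le_ncard (Set.insert_subset s2 s1) (Set.toFinite _)
      rw [Set.ncard_insert_of_notMem hn0 (Set.toFinite _)] at h3
      change (cl E (T (x + Pi.single u 1))).ncard ≤ k at hle
      omega
    rw [dn_eq_of hmem (by omega)]
    exact hs
  refine ⟨w0, hc0, fun x hx => ?_⟩
  by_cases hxu : x u = 0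
  · intro i hi
    by_contra hni
    have h1 : T (Pi.single u 1) i = 0 := by by_contra h; exact hni (hs0 _ h)
    have h2 : T (x + Pi.single u 1) i ≠ 0 := by
      rw [map_add, Pi.add_apply, h1, add_zero]; exact hi
    refine hni (B _ ?_ ?_ i h2)
    · intro i hi
      by_cases h : x i = 0
      · rw [Pi.add_apply, h, zero_add] at hi
        exact single_supp_dn u i hi
      · exact hx i h
    · rw [Pi.add_apply, hxu, zero_add]; exact hsu
  · exact B x hx hxu

lemma exists_map {T : (Fin n → F) ≃ₗ[F] (Fin n → F)} (hT : Iso E T) :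
    ∃ s : Fin n → Fin n, ∀ u, (dn E (s u)).ncard = (dn E u).ncard ∧
      ∀ x : Fin n → F, (∀ i, x i ≠ 0 → i ∈ dn E u) → ∀ i, T x i ≠ 0 → i ∈ dn E (s u) := by
  choose s hs using fun u => key (E := E) (F := F) _ T hT u rfl
  exact ⟨s, hs⟩

/-- there is an index in the class of `s u` where `T e_u` is nonzero -/
lemma top_mem {T : (Fin n → F) ≃ₗ[F] (Fin n → F)} (hT : Iso E T) {s : Fin n → Fin n}
    (hs : ∀ u, (dn E (s u)).ncard = (dn E u).ncard ∧
      ∀ x : Fin n → F, (∀ i, x i ≠ 0 → i ∈ dn E u) → ∀ i, T x i ≠ 0 → i ∈ dn E (s u)) (u : Fin n) :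
    ∃ j, T (Pi.single u 1) j ≠ 0 ∧ gpi E j = gpi E (s u) := by
  have h1 := (hs u).2 _ (single_supp_dn u)
  have hc : (cl E (T (Pi.single u 1))).ncard = (dn E u).ncard := by
    have := hT (Pi.single u 1)
    rw [weight_eq (single_supp_dn u) (by simp)] at this
    exact this
  have heq : cl E (T (Pi.single u 1)) = dn E (s u) :=
    Set.eq_of_subset_of_ncard_le (cl_sub_dn h1) (by rw [hc, (hs u).1]) (Set.toFinite _)
  have hm : s u ∈ cl E (T (Pi.single u 1)) := by rw [heq]; exact mem_dn_self _
  obtain ⟨j, hj, hd⟩ := hm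
  exact ⟨j, hj, gpi_eq.2 ⟨hd, h1 j hj⟩⟩

lemma s_mono {T : (Fin n → F) ≃ₗ[F] (Fin n → F)} (hT : Iso E T) {s : Fin n → Fin n}
    (hs : ∀ u, (dn E (s u)).ncard = (dn E u).ncard ∧
      ∀ x : Fin n → F, (∀ i, x i ≠ 0 → i ∈ dn E u) → ∀ i, T x i ≠ 0 → i ∈ dn E (s u)) {u v : Fin n}
    (h : gdom E u v) : gdom E (s u) (s v) := by
  obtain ⟨j, hj, hj2⟩ := top_mem hT hs v
  have : j ∈ dn E (s u) := (hs u).2 _ (fun i hi => dn_sub h (single_supp_dn v i hi)) j hj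
  exact Relation.ReflTransGen.trans this (gpi_eq.1 hj2).1

lemma s_inv {T : (Fin n → F) ≃ₗ[F] (Fin n → F)} {s t : Fin n → Fin n}
    (hs : ∀ u, (dn E (s u)).ncard = (dn E u).ncard ∧
      ∀ x : Fin n → F, (∀ i, x i ≠ 0 → i ∈ dn E u) → ∀ i, T x i ≠ 0 → i ∈ dn E (s u))
    (ht : ∀ u, (dn E (t u)).ncard = (dn E u).ncard ∧
      ∀ x : Fin n → F, (∀ i, x i ≠ 0 → i ∈ dn E u) → ∀ i, T.symm x i ≠ 0 → i ∈ dn E (t u))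
    (u : Fin n) : gpi E (t (s u)) = gpi E u := by
  have h1 := (ht (s u)).2 _ ((hs u).2 _ (single_supp_dn u)) u (by simp)
  have h2 := dn_eq_of h1 (by rw [(ht _).1, (hs _).1])
  refine gpi_eq.2 ⟨h1, ?_⟩
  have : t (s u) ∈ dn E u := by rw [h2]; exact mem_dn_self _
  exact this

lemma hgt_le_s {T : (Fin n → F) ≃ₗ[F] (Fin n → F)} (hT : Iso E T) {s t : Fin n → Fin n}
    (hs : ∀ u, (dn E (s u)).ncard = (dn E u).ncard ∧
      ∀ x : Fin n → F, (∀ i, x i ≠ 0 → i ∈ dn E u) → ∀ i, T x i ≠ 0 → i ∈ dn E (s u))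
    (ht : ∀ u, (dn E (t u)).ncard = (dn E u).ncard ∧
      ∀ x : Fin n → F, (∀ i, x i ≠ 0 → i ∈ dn E u) → ∀ i, T.symm x i ≠ 0 → i ∈ dn E (t u))
    (u : Fin n) : hgt E (gpi E u) ≤ hgt E (gpi E (s u)) := by
  let f : Vred E → Vred E := Quotient.lift (fun v => gpi E (s v)) (fun a b h =>
    gpi_eq.2 ⟨s_mono hT hs h.1, s_mono hT hs h.2⟩)
  have hf : ∀ v, f (gpi E v) = gpi E (s v) := fun v => rfl
  rw [← hf]
  apply hgt_le_map
  · intro a b hab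
    obtain ⟨a, rfl⟩ := gpi_surj a
    obtain ⟨b, rfl⟩ := gpi_surj b
    rw [hf, hf, gpi_eq] at hab
    rw [← s_inv hs ht a, ← s_inv hs ht b]
    exact gpi_eq.2 ⟨s_mono hT.symm ht hab.1, s_mono hT.symm ht hab.2⟩
  · intro a b hab
    obtain ⟨a, rfl⟩ := gpi_surj a
    obtain ⟨b, rfl⟩ := gpi_surj b
    rw [hf, hf]
    exact ple_gpi.2 (s_mono hT hs (ple_gpi.1 hab))

lemma backward (H : ∀ D : Submodule F (Fin n → F),
        ∃ (T : (Fin n → F) →ₗ[F] (Fin n → F)) (Dfam : ℕ → Submodule F (Fin n → F)),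
          Function.Bijective T ∧
          (∀ z : Fin n → F, gweight E (T z) = gweight E z) ∧
          (∀ i : ℕ, ∀ c ∈ Dfam i, ∀ j : Fin n, c j ≠ 0 → hgt E (gpi E j) = i) ∧
          Submodule.map T D = ⨆ i : ℕ, Dfam i) : Hierarchical E := by
  intro a b ha hab
  refine ⟨?_, fun h => by rw [h] at hab; omega⟩
  by_contra hnot
  obtain ⟨u, rfl⟩ := gpi_surj a
  obtain ⟨v, rfl⟩ := gpi_surj b
  rw [ple_gpi] at hnot
  have hnot2 : ¬ gdom E v u := fun h => by
    have := hgt_mono (ple_gpi.2 h); omega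
  obtain ⟨T0, Dfam, hbij, hiso, hsupp, hmap⟩ := H (Submodule.span F {Pi.single u 1 + Pi.single v 1})
  let T := LinearEquiv.ofBijective T0 hbij
  have hTT : ∀ z, T z = T0 z := fun z => rfl
  have hT : Iso E T := hiso
  obtain ⟨s, hs⟩ := exists_map hT
  obtain ⟨t, ht⟩ := exists_map hT.symm
  have hh : ∀ w, hgt E (gpi E (s w)) = hgt E (gpi E w) := by
    intro w
    apply le_antisymm _ (hgt_le_s hT hs ht w)
    have h1 := hgt_le_s (T := T.symm) hT.symm ht (t := s) (by simpa using hs) (s w)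
    rwa [s_inv hs ht] at h1
  have back : ∀ x y, gdom E (s x) (s y) → gdom E x y := by
    intro x y h
    have := ple_gpi.2 (s_mono hT.symm ht h)
    rw [s_inv hs ht, s_inv hs ht] at this
    exact ple_gpi.1 this
  have cross : ∀ x y j, ¬ gdom E y x → gpi E j = gpi E (s x) → T (Pi.single y 1) j = 0 := by
    intro x y j hxy hj
    by_contra hne
    have h1 : j ∈ dn E (s y) := (hs y).2 _ (single_supp_dn y) j hne
    exact hxy (back y x (Relation.ReflTransGen.trans h1 (gpi_eq.1 hj).1))
  obtain ⟨j, hj, hj2⟩ := top_mem hT hs u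
  obtain ⟨l, hl, hl2⟩ := top_mem hT hs v
  set y : Fin n → F := T0 (Pi.single u 1 + Pi.single v 1) with hy
  have hyj : y j ≠ 0 := by
    rw [hy, map_add, Pi.add_apply, ← hTT, ← hTT, cross u v j hnot2 hj2, add_zero]; exact hj
  have hyl : y l ≠ 0 := by
    rw [hy, map_add, Pi.add_apply, ← hTT, ← hTT, cross v u l hnot hl2, zero_add]; exact hl
  rw [Submodule.map_span, Set.image_singleton, ← hy] at hmap
  have hex : ∃ i, ∃ d ∈ Dfam i, d ≠ 0 := by
    by_contra hno
    push Not at hno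
    have : (⨆ i, Dfam i) ≤ ⊥ := iSup_le fun i d hd => (Submodule.mem_bot F).2 (hno i d hd)
    have hy0 : y ∈ (⊥ : Submodule F (Fin n → F)) :=
      this (hmap ▸ Submodule.mem_span_singleton_self y)
    rw [Submodule.mem_bot] at hy0
    rw [hy0] at hyj
    exact hyj rfl
  obtain ⟨i, d, hd, hd0⟩ := hex
  have hdy : d ∈ Submodule.span F {y} := hmap ▸ Submodule.mem_iSup_of_mem i hd
  obtain ⟨c, rfl⟩ := Submodule.mem_span_singleton.1 hdy
  have hc : c ≠ 0 := fun h => hd0 (by rw [h, zero_smul])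
  have e1 := hsupp i _ hd j (by simpa using ⟨hc, hyj⟩)
  have e2 := hsupp i _ hd l (by simpa using ⟨hc, hyl⟩)
  rw [hj2, hh] at e1
  rw [hl2, hh] at e2
  omega

/-- projection to level `i` -/
noncomputable def pr (F : Type*) [Field F] (h : Fin n → ℕ) (i : ℕ) :
    (Fin n → F) →ₗ[F] (Fin n → F) where
  toFun x j := if h j = i then x j else 0
  map_add' x y := by ext j; by_cases hh : h j = i <;> simp [hh]
  map_smul' c x := by ext j; by_cases hh : h j = i <;> simp [hh]

lemma pr_apply (h : Fin n → ℕ) (i : ℕ) (x : Fin n → F) (j : Fin n) :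
    pr F h i x j = if h j = i then x j else 0 := rfl

/-- vectors supported on levels at most `i` -/
def low (F : Type*) [Field F] (h : Fin n → ℕ) (i : ℕ) : Submodule F (Fin n → F) where
  carrier := {x | ∀ j, i < h j → x j = 0}
  zero_mem' := fun _ _ => rfl
  add_mem' := fun {a b} ha hb j hj => by rw [Pi.add_apply, ha j hj, hb j hj, add_zero]
  smul_mem' := fun c x hx j hj => by rw [Pi.smul_apply, hx j hj, smul_zero]

lemma mem_low {h : Fin n → ℕ} {i : ℕ} {x : Fin n → F} :
    x ∈ low F h i ↔ ∀ j, i < h j → x j = 0 := Iff.rfl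

lemma pr_mem_low (h : Fin n → ℕ) (i : ℕ) (x : Fin n → F) : pr F h i x ∈ low F h i := by
  intro j hj
  rw [pr_apply, if_neg (by omega)]

lemma pr_pr (h : Fin n → ℕ) (i : ℕ) (x : Fin n → F) : pr F h i (pr F h i x) = pr F h i x := by
  ext j
  simp only [pr_apply]
  split_ifs <;> rfl

lemma exists_g (h : Fin n → ℕ) (D : Submodule F (Fin n → F)) (i : ℕ) :
    ∃ g : (Fin n → F) →ₗ[F] (Fin n → F), (∀ x, g x ∈ low F h i) ∧
      (∀ x, pr F h i (g x) = pr F h i x) ∧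
      (∀ x ∈ (D ⊓ low F h i).map (pr F h i), g x ∈ D) := by
  set D' := D ⊓ low F h i with hD'
  let p : D' →ₗ[F] D'.map (pr F h i) := (pr F h i).submoduleMap D'
  have hp : Function.Surjective p := (pr F h i).submoduleMap_surjective D'
  obtain ⟨σ, hσ⟩ := p.exists_rightInverse_of_surjective (LinearMap.range_eq_top.2 hp)
  obtain ⟨q, hq⟩ := (D'.map (pr F h i)).subtype.exists_leftInverse_of_injective
    (Submodule.ker_subtype _)
  have hσ' : ∀ z, pr F h i (σ z : Fin n → F) = z := fun z => by
    have := congrArg Subtype.val (LinearMap.congr_fun hσ z)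
    exact this
  have hq' : ∀ z : D'.map (pr F h i), q z = z := fun z => LinearMap.congr_fun hq z
  have hfix : ∀ z ∈ D'.map (pr F h i), pr F h i z = z := by
    rintro _ ⟨x, -, rfl⟩; exact pr_pr _ _ _
  refine ⟨D'.subtype ∘ₗ σ ∘ₗ q ∘ₗ pr F h i + pr F h i
    - (D'.map (pr F h i)).subtype ∘ₗ q ∘ₗ pr F h i, ?_, ?_, ?_⟩
  · intro x
    refine Submodule.sub_mem _ (Submodule.add_mem _ ?_ (pr_mem_low _ _ _)) ?_
    · exact (σ (q (pr F h i x))).2.2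
    · have := hfix _ (q (pr F h i x)).2
      change ((q (pr F h i x) : D'.map (pr F h i)) : Fin n → F) ∈ _
      rw [← this]
      exact pr_mem_low _ _ _
  · intro x
    simp only [LinearMap.sub_apply, LinearMap.add_apply, LinearMap.comp_apply, map_sub, map_add,
      Submodule.subtype_apply, hσ', pr_pr]
    rw [hfix _ (q (pr F h i x)).2]
    abel
  · intro x hx
    simp only [LinearMap.sub_apply, LinearMap.add_apply, LinearMap.comp_apply,
      Submodule.subtype_apply]
    rw [hfix x hx, hq' ⟨x, hx⟩]
    simp only [add_sub_cancel_right]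
    exact (σ ⟨x, hx⟩).2.1

lemma triangular (h : Fin n → ℕ) (D : Submodule F (Fin n → F)) :
    ∃ S : (Fin n → F) →ₗ[F] (Fin n → F),
      (∀ m x, x ∈ low F h m → S x ∈ low F h m ∧ pr F h m (S x) = pr F h m x) ∧
      (⨆ i, (D ⊓ low F h i).map (pr F h i)).map S = D := by
  choose g hg1 hg2 hg3 using exists_g (F := F) h D
  obtain ⟨N, hN⟩ : ∃ N, ∀ j, h j < N :=
    ⟨Finset.univ.sup h + 1, fun j => Nat.lt_succ_of_le (Finset.le_sup (Finset.mem_univ j))⟩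
  have hlowmono : ∀ {i m : ℕ}, i ≤ m → low F h i ≤ low F h m :=
    fun him x hx j hj => hx j (by omega)
  have hprz : ∀ m i x, x ∈ low F h m → m < i → pr F h i x = 0 := by
    intro m i x hx hmi
    ext j
    rw [pr_apply]
    split_ifs with hj
    · exact hx j (by omega)
    · rfl
  let S : (Fin n → F) →ₗ[F] (Fin n → F) := ∑ i ∈ Finset.range N, g i ∘ₗ pr F h i
  have hS : ∀ x, S x = ∑ i ∈ Finset.range N, g i (pr F h i x) := fun x => by
    simp [S, LinearMap.sum_apply]
  have hA : ∀ m x, x ∈ low F h m → S x ∈ low F h m ∧ pr F h m (S x) = pr F h m x := by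
    intro m x hx
    constructor
    · rw [hS]
      refine Submodule.sum_mem _ fun i _ => ?_
      by_cases him : i ≤ m
      · exact hlowmono him (hg1 i _)
      · rw [hprz m i x hx (by omega), map_zero]
        exact Submodule.zero_mem _
    · rw [hS, map_sum]
      by_cases hm : m < N
      · rw [Finset.sum_eq_single_of_mem m (Finset.mem_range.2 hm)]
        · rw [hg2, pr_pr]
        · intro i _ him
          rcases lt_or_gt_of_ne him with hlt | hgt
          · exact hprz i m _ (hg1 i _) hlt
          · rw [hprz m i x hx hgt, map_zero, map_zero]
      · have hz : ∀ z : Fin n → F, pr F h m z = 0 := fun z => by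
          ext j
          have := hN j
          rw [pr_apply, if_neg (by omega)]; rfl
        simp [hz]
  have hB : ∀ i, ∀ y ∈ (D ⊓ low F h i).map (pr F h i), S y ∈ D := by
    intro i y hy
    rw [hS]
    refine Submodule.sum_mem _ fun k _ => ?_
    obtain ⟨x, hx, rfl⟩ := hy
    by_cases hki : k = i
    · subst hki
      rw [pr_pr]
      exact hg3 k _ (Submodule.mem_map_of_mem hx)
    · have : pr F h k (pr F h i x) = 0 := by
        ext j
        simp only [pr_apply, Pi.zero_apply]
        split_ifs <;> first | rfl | omega
      rw [this, map_zero]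
      exact Submodule.zero_mem _
  refine ⟨S, hA, le_antisymm ?_ ?_⟩
  · rw [Submodule.map_iSup]
    refine iSup_le fun i => ?_
    rintro _ ⟨y, hy, rfl⟩
    exact hB i y hy
  · have hC : ∀ m x, x ∈ D → (∀ j, m ≤ h j → x j = 0) →
        x ∈ (⨆ i, (D ⊓ low F h i).map (pr F h i)).map S := by
      intro m
      induction m with
      | zero =>
        intro x _ hx
        have : x = 0 := by ext j; exact hx j (Nat.zero_le _)
        rw [this]; exact Submodule.zero_mem _
      | succ m ih =>
        intro x hxD hx
        have hxl : x ∈ low F h m := fun j hj => hx j hj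
        have hmem : pr F h m x ∈ (D ⊓ low F h m).map (pr F h m) :=
          Submodule.mem_map_of_mem ⟨hxD, hxl⟩
        have h1 : S (pr F h m x) ∈ (⨆ i, (D ⊓ low F h i).map (pr F h i)).map S :=
          Submodule.mem_map_of_mem (Submodule.mem_iSup_of_mem m hmem)
        have h2 := hA m _ (pr_mem_low h m x)
        have h3 : x - S (pr F h m x) ∈ (⨆ i, (D ⊓ low F h i).map (pr F h i)).map S := by
          apply ih
          · exact Submodule.sub_mem _ hxD (hB m _ hmem)
          · intro j hj
            rcases hj.lt_or_eq with hlt | heq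
            · rw [Pi.sub_apply, hxl j hlt, h2.1 j hlt, sub_zero]
            · have h4 := congrFun h2.2 j
              rw [pr_pr, pr_apply, pr_apply, if_pos heq.symm, if_pos heq.symm] at h4
              rw [Pi.sub_apply, h4, sub_self]
        have := Submodule.add_mem _ h3 h1
        rwa [sub_add_cancel] at this
    intro x hx
    exact hC N x hx (fun j hj => absurd (hN j) (by omega))

lemma cl_le (H : Hierarchical E) {m : ℕ} {x y : Fin n → F}
    (hx : x ∈ low F (fun j => hgt E (gpi E j)) m)
    (hxy : pr F (fun j => hgt E (gpi E j)) m x = pr F (fun j => hgt E (gpi E j)) m y)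
    {w : Fin n} (hw : hgt E (gpi E w) = m) (hyw : y w ≠ 0) : cl E x ⊆ cl E y := by
  rintro v ⟨u, hu, huv⟩
  have hle : hgt E (gpi E u) ≤ m := by
    by_contra hlt
    exact hu (hx u (by simpa using hlt))
  rcases hle.lt_or_eq with hlt | heq
  · have := hier_lt H m (gpi E w) (gpi E u) hw (by omega)
    exact ⟨w, hyw, Relation.ReflTransGen.trans (ple_gpi.1 this) huv⟩
  · refine ⟨u, ?_, huv⟩
    have h4 := congrFun hxy u
    rw [pr_apply, pr_apply, if_pos heq, if_pos heq] at h4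
    change y u ≠ 0
    rw [← h4]
    exact hu

lemma forward (H : Hierarchical E) (D : Submodule F (Fin n → F)) :
        ∃ (T : (Fin n → F) →ₗ[F] (Fin n → F)) (Dfam : ℕ → Submodule F (Fin n → F)),
          Function.Bijective T ∧
          (∀ z : Fin n → F, gweight E (T z) = gweight E z) ∧
          (∀ i : ℕ, ∀ c ∈ Dfam i, ∀ j : Fin n, c j ≠ 0 → hgt E (gpi E j) = i) ∧
          Submodule.map T D = ⨆ i : ℕ, Dfam i := by
  set h : Fin n → ℕ := fun j => hgt E (gpi E j) with hh
  obtain ⟨S, hS, hmap⟩ := triangular (F := F) h D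
  have htop : ∀ x : Fin n → F, x ≠ 0 → ∃ w, x w ≠ 0 ∧ x ∈ low F h (h w) := by
    intro x hx
    have hne : {j | x j ≠ 0}.Nonempty := Function.ne_iff.1 hx
    obtain ⟨w, hw, hmax⟩ := Set.exists_max_image _ h (Set.toFinite _) hne
    refine ⟨w, hw, fun j hj => ?_⟩
    by_contra hne
    exact absurd (hmax j hne) (by omega)
  have hSw : ∀ (x : Fin n → F) w, x w ≠ 0 → x ∈ low F h (h w) → S x w = x w := by
    intro x w _ hl
    have h4 := congrFun (hS _ x hl).2 w
    rwa [pr_apply, pr_apply, if_pos rfl, if_pos rfl] at h4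
  have hinj : Function.Injective S := by
    rw [injective_iff_map_eq_zero]
    intro x hx
    by_contra hne
    obtain ⟨w, hw, hl⟩ := htop x hne
    have := hSw x w hw hl
    rw [hx] at this
    exact hw this.symm
  have hwt : ∀ x, gweight E (S x) = gweight E x := by
    intro x
    by_cases hx : x = 0
    · rw [hx, map_zero]
    obtain ⟨w, hw, hl⟩ := htop x hx
    have h1 := hS _ x hl
    have : cl E (S x) = cl E x := Set.Subset.antisymm
      (cl_le H h1.1 h1.2 rfl hw)
      (cl_le H hl h1.2.symm rfl (by rw [hSw x w hw hl]; exact hw))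
    exact congrArg Set.ncard this
  let e := LinearEquiv.ofInjectiveEndo S hinj
  have he : ∀ x, e x = S x := fun x => rfl
  refine ⟨e.symm.toLinearMap, fun i => (D ⊓ low F h i).map (pr F h i), e.symm.bijective, ?_, ?_, ?_⟩
  · intro z
    have := hwt (e.symm z)
    rw [← he, e.apply_symm_apply] at this
    exact this.symm
  · rintro i _ ⟨x, -, rfl⟩ j hj
    by_contra hne
    rw [pr_apply, if_neg hne] at hj
    exact hj rfl
  · conv_lhs => rw [← hmap]
    ext x
    constructor
    · rintro ⟨_, ⟨y, hy, rfl⟩, rfl⟩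
      have : e.symm (S y) = y := by rw [← he, e.symm_apply_apply]
      change e.symm (S y) ∈ _
      rw [this]; exact hy
    · intro hx
      exact ⟨S x, ⟨x, hx, rfl⟩, e.symm_apply_apply x⟩

end S17

/-- the poset `P_G` determined by the reduced canonical form of `G` is
hierarchical iff every linear code `D ⊆ F_q^n` admits a `G`-canonical decomposition,
i.e. `D` is `G`-equivalent to a code `D_1 ⊕ ⋯ ⊕ D_{h_G}` with `supp(D_i) ⊆ V_i` for
each level `i`. -/
theorem stmt_17 {n : ℕ} (hn : 1 ≤ n) {F : Type*} [Field F] [Fintype F]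
    (E : Fin n → Fin n → Prop) (hE : Irreflexive E) :
    Hierarchical E ↔
      ∀ D : Submodule F (Fin n → F),
        ∃ (T : (Fin n → F) →ₗ[F] (Fin n → F)) (Dfam : ℕ → Submodule F (Fin n → F)),
          Function.Bijective T ∧
          (∀ z : Fin n → F, gweight E (T z) = gweight E z) ∧
          (∀ i : ℕ, ∀ c ∈ Dfam i, ∀ j : Fin n, c j ≠ 0 → hgt E (gpi E j) = i) ∧
          Submodule.map T D = ⨆ i : ℕ, Dfam i := by
  exact ⟨fun H D => S17.forward H D, fun H => S17.backward H⟩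
end
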